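/- Lower semicontinuity of perimeter in 1-quasiopen sets: Let U ⊂ X be a 1-quasiopen set and let E, E_i ⊂ X (i ∈ ℕ) be μ-measurable sets with P(E,U) < ∞ and P(E_i,U) < ∞ for every i, and suppose that χ_{E_i} → χ_E in L^1_loc(U). Then P(E,U) ≤ liminf_{i→∞} P(E_i,U). -/

import Mathlib

open MeasureTheory Filter Metric Set
open scoped Topology ENNReal NNReal symmDiff

noncomputable section

namespace PaperBV

/-- A rectifiable curve parametrized by arc-length: a `1`-Lipschitz map on `[0, len]`. -/
structure Curve (X : Type*) [MetricSpace X] where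
  len : ℝ
  len_nonneg : 0 ≤ len
  toFun : ℝ → X
  lip : LipschitzOnWith 1 toFun (Set.Icc 0 len)

variable {X : Type*} [MetricSpace X] [MeasurableSpace X] [BorelSpace X]

/-- The curve lies in the set `A`. -/
def Curve.In (γ : Curve X) (A : Set X) : Prop :=
  ∀ t ∈ Set.Icc (0 : ℝ) γ.len, γ.toFun t ∈ A

/-- The curve integral `∫_γ g ds` of a nonnegative function, for an
arc-length parametrized curve. -/
def Curve.integral (γ : Curve X) (g : X → ℝ≥0∞) : ℝ≥0∞ :=
  ∫⁻ t in Set.Icc (0 : ℝ) γ.len, g (γ.toFun t)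

/-- The upper gradient inequality `|u(x) - u(y)| ≤ ∫_γ g ds` along the curve `γ`,
where `x, y` are the endpoints of `γ`. -/
def UGIneq (u : X → ℝ) (g : X → ℝ≥0∞) (γ : Curve X) : Prop :=
  ENNReal.ofReal |u (γ.toFun 0) - u (γ.toFun γ.len)| ≤ γ.integral g

/-- `g` is an upper gradient of `u` on `X`: `g` is nonnegative (automatic in `ℝ≥0∞`),
Borel, and the upper gradient inequality holds along every curve. -/
def IsUpperGradient (u : X → ℝ) (g : X → ℝ≥0∞) : Prop :=
  Measurable g ∧ ∀ γ : Curve X, UGIneq u g γ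

/-- A family of curves has zero `1`-modulus: there is a nonnegative Borel function
`ρ ∈ L¹(X)` whose curve integral is infinite along every curve of the family. -/
def ZeroMod (μ : Measure X) (Γ : Set (Curve X)) : Prop :=
  ∃ ρ : X → ℝ≥0∞, Measurable ρ ∧ (∫⁻ x, ρ x ∂μ) < ∞ ∧ ∀ γ ∈ Γ, γ.integral ρ = ∞

/-- `g` is a `1`-weak upper gradient of `u` in `A`: `g` is nonnegative, `μ`-measurable,
and the upper gradient inequality holds along `1`-a.e. curve in `A`. -/
def IsWeakUpperGradientOn (μ : Measure X) (u : X → ℝ) (g : X → ℝ≥0∞) (A : Set X) : Prop :=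
  AEMeasurable g μ ∧ ZeroMod μ {γ : Curve X | γ.In A ∧ ¬ UGIneq u g γ}

/-- A nonnegative function `g` belongs to `L¹_loc(A)`. -/
def LIntegrableLocOn (μ : Measure X) (g : X → ℝ≥0∞) (A : Set X) : Prop :=
  ∀ x ∈ A, ∃ r > (0 : ℝ), (∫⁻ y in A ∩ Metric.ball x r, g y ∂μ) < ∞

/-- `g` is the minimal `1`-weak upper gradient of `u` in `A`: a `1`-weak upper gradient
satisfying `g ≤ g'` `μ`-a.e. in `A` for every `1`-weak upper gradient `g' ∈ L¹_loc(A)`. -/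
def IsMinimalWUG (μ : Measure X) (u : X → ℝ) (g : X → ℝ≥0∞) (A : Set X) : Prop :=
  IsWeakUpperGradientOn μ u g A ∧
    ∀ g' : X → ℝ≥0∞, IsWeakUpperGradientOn μ u g' A → LIntegrableLocOn μ g' A →
      ∀ᵐ x ∂(μ.restrict A), g x ≤ g' x

/-- The Newtonian norm `‖u‖_{N^{1,1}(A)}` (valued in `ℝ≥0∞`). -/
def NNorm (μ : Measure X) (A : Set X) (u : X → ℝ) : ℝ≥0∞ :=
  (∫⁻ x in A, ENNReal.ofReal |u x| ∂μ) +
    ⨅ (g : X → ℝ≥0∞) (_ : IsWeakUpperGradientOn μ u g A), ∫⁻ x in A, g x ∂μ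

/-- `u ∈ N^{1,1}(A)`. -/
def MemN11 (μ : Measure X) (A : Set X) (u : X → ℝ) : Prop :=
  NNorm μ A u < ∞

/-- `u ∈ N^{1,1}_loc(A)`: every point of `A` has a ball `B` with `u ∈ N^{1,1}(A ∩ B)`. -/
def MemN11Loc (μ : Measure X) (A : Set X) (u : X → ℝ) : Prop :=
  ∀ x ∈ A, ∃ r > (0 : ℝ), NNorm μ (A ∩ Metric.ball x r) u < ∞

/-- `u ∈ N^{1,1}(Ω')` for every bounded open `Ω' ⊆ X`. -/
def MemN11LocBounded (μ : Measure X) (u : X → ℝ) : Prop :=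
  ∀ Ω' : Set X, IsOpen Ω' → Bornology.IsBounded Ω' → NNorm μ Ω' u < ∞

/-- `u ∈ N^{1,1}_0(Ω)`: `u ∈ N^{1,1}(X)` and `u = 0` outside `Ω`. -/
def MemN110 (μ : Measure X) (Ω : Set X) (u : X → ℝ) : Prop :=
  MemN11 μ Set.univ u ∧ ∀ x ∉ Ω, u x = 0

/-- The `1`-capacity `capa₁(A) = inf {‖u‖_{N^{1,1}(X)} : u ∈ N^{1,1}(X), u ≥ 1 on A}`. -/
def capa1 (μ : Measure X) (A : Set X) : ℝ≥0∞ :=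
  ⨅ (u : X → ℝ) (_ : MemN11 μ Set.univ u) (_ : ∀ x ∈ A, 1 ≤ u x), NNorm μ Set.univ u

/-- `U` is `1`-quasiopen: for every `ε > 0` there is an open `G` with `capa₁(G) < ε`
such that `U ∪ G` is open. -/
def QuasiOpen (μ : Measure X) (U : Set X) : Prop :=
  ∀ ε : ℝ, 0 < ε → ∃ G : Set X, IsOpen G ∧ capa1 μ G < ENNReal.ofReal ε ∧ IsOpen (U ∪ G)

/-- `u ∈ L¹_loc(A)`. -/
def MemL1Loc (μ : Measure X) (A : Set X) (u : X → ℝ) : Prop :=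
  AEMeasurable u (μ.restrict A) ∧
    ∀ x ∈ A, ∃ r > (0 : ℝ), (∫⁻ y in A ∩ Metric.ball x r, ENNReal.ofReal |u y| ∂μ) < ∞

/-- `v i → u` in `L¹_loc(A)`: every `x ∈ A` has a ball `B` with `v i → u` in `L¹(A ∩ B)`. -/
def L1LocConv (μ : Measure X) (A : Set X) (v : ℕ → X → ℝ) (u : X → ℝ) : Prop :=
  ∀ x ∈ A, ∃ r > (0 : ℝ),
    Filter.Tendsto (fun i => ∫⁻ y in A ∩ Metric.ball x r, ENNReal.ofReal |v i y - u y| ∂μ)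
      Filter.atTop (𝓝 0)

/-- `u` is locally Lipschitz on `Ω`. -/
def LocLipOn (u : X → ℝ) (Ω : Set X) : Prop :=
  ∀ x ∈ Ω, ∃ r > (0 : ℝ), ∃ K : ℝ≥0, LipschitzOnWith K u (Ω ∩ Metric.ball x r)

/-- The total variation `‖Du‖(Ω)` of `u` in an open set `Ω`: the infimum of
`liminf_i ∫_Ω g_{v i} dμ` over sequences of locally Lipschitz functions `v i → u`
in `L¹_loc(Ω)`, where `g_{v i}` is the minimal `1`-weak upper gradient of `v i` in `Ω`. -/
def tvOpen (μ : Measure X) (Ω : Set X) (u : X → ℝ) : ℝ≥0∞ :=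
  ⨅ (v : ℕ → X → ℝ) (g : ℕ → X → ℝ≥0∞) (_ : ∀ i, LocLipOn (v i) Ω)
    (_ : ∀ i, IsMinimalWUG μ (v i) (g i) Ω) (_ : L1LocConv μ Ω v u),
    Filter.liminf (fun i => ∫⁻ x in Ω, g i x ∂μ) Filter.atTop

/-- The total variation `‖Du‖(A)` of `u` in an arbitrary set `A`:
`inf {‖Du‖(Ω) : Ω ⊇ A open}`. -/
def tv (μ : Measure X) (A : Set X) (u : X → ℝ) : ℝ≥0∞ :=
  ⨅ (Ω : Set X) (_ : IsOpen Ω) (_ : A ⊆ Ω), tvOpen μ Ω u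

/-- The perimeter `P(E, A) = ‖Dχ_E‖(A)` for arbitrary `A`. -/
def perim (μ : Measure X) (E A : Set X) : ℝ≥0∞ :=
  tv μ A (Set.indicator E (fun _ => (1 : ℝ)))

/-- The perimeter `P(E, Ω) = ‖Dχ_E‖(Ω)` for open `Ω`. -/
def perimOpen (μ : Measure X) (E Ω : Set X) : ℝ≥0∞ :=
  tvOpen μ Ω (Set.indicator E (fun _ => (1 : ℝ)))

/-- The measure `μ` is doubling with constant `Cd`. -/
def Doubling (μ : Measure X) (Cd : ℝ) : Prop :=
  1 ≤ Cd ∧ ∀ (x : X) (r : ℝ), 0 < r →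
    0 < μ (Metric.ball x (2 * r)) ∧
      μ (Metric.ball x (2 * r)) ≤ ENNReal.ofReal Cd * μ (Metric.ball x r) ∧
      μ (Metric.ball x r) < ∞

/-- The space supports a `(1,1)`-Poincaré inequality with constants `CP, lam`. -/
def Poincare (μ : Measure X) (CP lam : ℝ) : Prop :=
  1 ≤ CP ∧ 1 ≤ lam ∧ ∀ (x : X) (r : ℝ), 0 < r → ∀ (u : X → ℝ) (g : X → ℝ≥0∞),
    MemL1Loc μ Set.univ u → IsUpperGradient u g →
      ENNReal.ofReal (⨍ y in Metric.ball x r, |u y - ⨍ z in Metric.ball x r, u z ∂μ| ∂μ)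
        ≤ ENNReal.ofReal (CP * r) *
            ((∫⁻ y in Metric.ball x (lam * r), g y ∂μ) / μ (Metric.ball x (lam * r)))

/-- The restricted spherical Hausdorff content of codimension one. -/
def HR (μ : Measure X) (R : ℝ) (A : Set X) : ℝ≥0∞ :=
  ⨅ (c : ℕ → X) (r : ℕ → ℝ) (_ : ∀ i, 0 < r i ∧ r i ≤ R)
    (_ : A ⊆ ⋃ i, Metric.ball (c i) (r i)),
    ∑' i, μ (Metric.ball (c i) (r i)) / ENNReal.ofReal (r i)

/-- The codimension-one Hausdorff measure `H(A) = lim_{R → 0} H_R(A)`. -/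
def Hcodim (μ : Measure X) (A : Set X) : ℝ≥0∞ :=
  ⨆ (R : ℝ) (_ : 0 < R), HR μ R A

/-- The lower approximate limit `u^∧`. -/
def lowerApprox (μ : Measure X) (u : X → ℝ) (x : X) : EReal :=
  sSup ((fun t : ℝ => (t : EReal)) ''
    {t : ℝ | Filter.Tendsto
      (fun r => μ (Metric.ball x r ∩ {y | u y < t}) / μ (Metric.ball x r))
      (𝓝[>] (0 : ℝ)) (𝓝 0)})

/-- The upper approximate limit `u^∨`. -/
def upperApprox (μ : Measure X) (u : X → ℝ) (x : X) : EReal :=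
  sInf ((fun t : ℝ => (t : EReal)) ''
    {t : ℝ | Filter.Tendsto
      (fun r => μ (Metric.ball x r ∩ {y | t < u y}) / μ (Metric.ball x r))
      (𝓝[>] (0 : ℝ)) (𝓝 0)})

/-- `u ∈ BV_loc(X)`: `u ∈ L¹_loc(X)` with `‖Du‖(Ω') < ∞` for every bounded open `Ω'`. -/
def MemBVLoc (μ : Measure X) (u : X → ℝ) : Prop :=
  MemL1Loc μ Set.univ u ∧
    ∀ Ω' : Set X, IsOpen Ω' → Bornology.IsBounded Ω' → tvOpen μ Ω' u < ∞

/-- The measure-theoretic interior `I_E`. -/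
def mInterior (μ : Measure X) (E : Set X) : Set X :=
  {x | Filter.Tendsto (fun r => μ (Metric.ball x r \ E) / μ (Metric.ball x r))
    (𝓝[>] (0 : ℝ)) (𝓝 0)}

/-- The measure-theoretic exterior `O_E`. -/
def mExterior (μ : Measure X) (E : Set X) : Set X :=
  {x | Filter.Tendsto (fun r => μ (Metric.ball x r ∩ E) / μ (Metric.ball x r))
    (𝓝[>] (0 : ℝ)) (𝓝 0)}

/-- The measure-theoretic boundary `∂*E`: the points where both `E` and its complement
have positive upper density. -/
def mBoundary (μ : Measure X) (E : Set X) : Set X :=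
  {x | 0 < Filter.limsup (fun r => μ (Metric.ball x r ∩ E) / μ (Metric.ball x r))
        (𝓝[>] (0 : ℝ)) ∧
       0 < Filter.limsup (fun r => μ (Metric.ball x r \ E) / μ (Metric.ball x r))
        (𝓝[>] (0 : ℝ))}

/-!
Fix `ε > 0`, an open `Ω ⊇ U` with `‖Du‖(Ω) < ∞`, and an open `G` of small capacity with `U ∪ G`
open. On `W = (U ∪ G) ∩ Ω` one builds competitors for `‖Du‖(W)` by gluing `(1 - η) w + η v`, where
`w` is an almost optimal approximation of `u i` in a neighbourhood of `U`, `v` is an almost optimal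
approximation of `u` in `Ω`, and `η` is a cutoff of small energy with `η = 1` near the part of `W`
where `w` is not controlled. The energy of the glued function is at most
`∫ gw + ∫ η gv + ∫ gη`, so everything depends on `∫ η gv` being small, uniformly in almost optimal
`v`. This holds because otherwise `(1 - η) v`, which is `L¹`-close to `u`, would have energy
smaller than `‖Du‖(Ω)` by a fixed amount.

The total variation is defined by locally Lipschitz functions, whereas capacity potentials need
not be continuous. A lower semicontinuous upper gradient `g` of a capacity potential, truncated, is
therefore integrated along paths that are continuous only up to a small scale: the resulting
potentials are locally Lipschitz with upper gradient `g`, and by compactness of curves they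
decrease to a function lying below the given potential. A Lipschitz partition of unity then patches
such cutoffs, for an exhaustion of `W`, into `η`.
-/

/-! ### Curves -/

section Curves

variable {Y : Type*} [MetricSpace Y]

theorem Curve.continuousOn (γ : Curve Y) : ContinuousOn γ.toFun (Icc 0 γ.len) :=
  γ.lip.continuousOn

theorem Curve.exists_Icc_mapsTo (γ : Curve Y) {O : Set Y} (hO : IsOpen O) {t : ℝ}
    (ht : t ∈ Ioo 0 γ.len) (htO : γ.toFun t ∈ O) :
    ∃ p q, Icc p q ∈ 𝓝 t ∧ Icc p q ⊆ Icc 0 γ.len ∧ MapsTo γ.toFun (Icc p q) O := by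
  have hcont : ContinuousAt γ.toFun t := γ.continuousOn.continuousAt (Icc_mem_nhds ht.1 ht.2)
  obtain ⟨p, q, -, hpq, hsub⟩ := exists_Icc_mem_subset_of_mem_nhds
    (inter_mem (Icc_mem_nhds ht.1 ht.2) (hcont (hO.mem_nhds htO)))
  exact ⟨p, q, hpq, hsub.trans inter_subset_left, hsub.trans inter_subset_right⟩

/-- The subcurve `γ|_[p, q]`, reparametrized to start at time `0`. -/
def Curve.restrict (γ : Curve Y) {p q : ℝ} (hpq : p ≤ q) (h : Icc p q ⊆ Icc 0 γ.len) :
    Curve Y where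
  len := q - p
  len_nonneg := sub_nonneg.2 hpq
  toFun s := γ.toFun (p + s)
  lip := by
    have hshift : LipschitzOnWith 1 (fun s : ℝ => p + s) (Icc 0 (q - p)) :=
      (LipschitzWith.mk_one fun a b => by simp).lipschitzOnWith
    have hmaps : MapsTo (fun s : ℝ => p + s) (Icc 0 (q - p)) (Icc 0 γ.len) :=
      fun s hs => h ⟨by linarith [hs.1], by linarith [hs.2]⟩
    exact mul_one (1 : ℝ≥0) ▸ γ.lip.comp hshift hmaps

theorem Curve.restrict_integral (γ : Curve Y) {p q : ℝ} (hpq : p ≤ q)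
    (h : Icc p q ⊆ Icc 0 γ.len) (f : Y → ℝ≥0∞) :
    (γ.restrict hpq h).integral f = ∫⁻ t in Icc p q, f (γ.toFun t) := by
  have hpre : (fun s => p + s) ⁻¹' Icc p q = Icc 0 (q - p) := by simp
  rw [← (measurePreserving_add_left volume p).setLIntegral_comp_preimage_emb
    (measurableEmbedding_addLeft p) (fun t => f (γ.toFun t)) (Icc p q), hpre]
  rfl

theorem Curve.restrict_integral_le (γ : Curve Y) {p q : ℝ} (hpq : p ≤ q)
    (h : Icc p q ⊆ Icc 0 γ.len) (f : Y → ℝ≥0∞) :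
    (γ.restrict hpq h).integral f ≤ γ.integral f :=
  (γ.restrict_integral hpq h f).trans_le (lintegral_mono_set h)

theorem uGIneq_restrict_iff (γ : Curve Y) {p q : ℝ} (hpq : p ≤ q) (h : Icc p q ⊆ Icc 0 γ.len)
    (u : Y → ℝ) (g : Y → ℝ≥0∞) :
    UGIneq u g (γ.restrict hpq h) ↔
      ENNReal.ofReal |u (γ.toFun p) - u (γ.toFun q)| ≤ ∫⁻ t in Icc p q, g (γ.toFun t) := by
  rw [UGIneq, γ.restrict_integral hpq h g]
  simp [Curve.restrict]

end Curves

/-! ### Properties of almost every curve -/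

section ZeroModulus

variable {Y : Type*} [MetricSpace Y] [MeasurableSpace Y] {μ : Measure Y}

theorem ZeroMod.mono {Γ Γ' : Set (Curve Y)} (h : ZeroMod μ Γ') (hsub : Γ ⊆ Γ') : ZeroMod μ Γ :=
  let ⟨ρ, hmeas, hfin, htop⟩ := h
  ⟨ρ, hmeas, hfin, fun γ hγ => htop γ (hsub hγ)⟩

theorem ZeroMod.exists_lintegral_le {Γ : Set (Curve Y)} (h : ZeroMod μ Γ) {ε : ℝ≥0∞}
    (hε : ε ≠ 0) :
    ∃ ρ : Y → ℝ≥0∞, Measurable ρ ∧ ∫⁻ x, ρ x ∂μ ≤ ε ∧ ∀ γ ∈ Γ, γ.integral ρ = ∞ := by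
  obtain ⟨ρ, hmeas, hfin, htop⟩ := h
  set I := ∫⁻ x, ρ x ∂μ
  set a := min ε 1 / (1 + I)
  have ha0 : a ≠ 0 := by simp [a, hε, hfin.ne, ENNReal.div_eq_zero_iff]
  have ha : a ≠ ∞ := ENNReal.div_ne_top (by simp) (by simp)
  refine ⟨fun x => a * ρ x, hmeas.const_mul a, ?_, fun γ hγ => ?_⟩
  · calc ∫⁻ x, a * ρ x ∂μ = a * I := lintegral_const_mul a hmeas
      _ ≤ a * (1 + I) := by gcongr; exact le_add_self
      _ = min ε 1 := ENNReal.div_mul_cancel (by simp) (by simp [hfin.ne])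
      _ ≤ ε := min_le_left _ _
  · rw [Curve.integral, lintegral_const_mul' a _ ha]
    exact (congrArg (a * ·) (htop γ hγ)).trans (ENNReal.mul_top ha0)

theorem ZeroMod.iUnion {ι : Type*} [Countable ι] {Γ : ι → Set (Curve Y)}
    (h : ∀ i, ZeroMod μ (Γ i)) : ZeroMod μ (⋃ i, Γ i) := by
  obtain ⟨δ, hδpos, hδ⟩ := ENNReal.exists_pos_sum_of_countable' one_ne_zero ι
  choose ρ hmeas hle htop using fun i => (h i).exists_lintegral_le (hδpos i).ne'
  refine ⟨fun x => ∑' i, ρ i x, Measurable.tsum hmeas, ?_, fun γ hγ => ?_⟩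
  · rw [lintegral_tsum fun i => (hmeas i).aemeasurable]
    exact (ENNReal.tsum_le_tsum hle).trans_lt (hδ.trans ENNReal.one_lt_top)
  · obtain ⟨i, hi⟩ := mem_iUnion.1 hγ
    exact top_unique ((htop i γ hi).ge.trans (lintegral_mono fun t => ENNReal.le_tsum i))

theorem ZeroMod.sUnion {S : Set (Set (Curve Y))} (hS : S.Countable)
    (h : ∀ Γ ∈ S, ZeroMod μ Γ) : ZeroMod μ (⋃₀ S) := by
  have := hS.to_subtype
  exact sUnion_eq_iUnion ▸ ZeroMod.iUnion fun Γ : S => h Γ Γ.2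

variable (μ) in
/-- The filter of properties of `1`-almost every curve: those that fail only on a family of zero
`1`-modulus. -/
def aeCurve : Filter (Curve Y) :=
  Filter.ofCountableUnion {Γ | ZeroMod μ Γ} (fun _ hS h => ZeroMod.sUnion hS h)
    fun _ h _ hsub => ZeroMod.mono h hsub

instance : CountableInterFilter (aeCurve μ) := countableInter_ofCountableUnion _ _ _

theorem eventually_aeCurve_iff {P : Curve Y → Prop} :
    (∀ᶠ γ in aeCurve μ, P γ) ↔ ZeroMod μ {γ | ¬ P γ} :=
  Iff.rfl

theorem eventually_integral_ne_top {f : Y → ℝ≥0∞} (hf : Measurable f)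
    (hfin : ∫⁻ x, f x ∂μ < ∞) : ∀ᶠ γ in aeCurve μ, γ.integral f ≠ ∞ :=
  ⟨f, hf, hfin, fun _ hγ => not_not.1 hγ⟩

end ZeroModulus

theorem Curve.aemeasurable (γ : Curve X) : AEMeasurable γ.toFun (volume.restrict (Icc 0 γ.len)) :=
  γ.continuousOn.aemeasurable measurableSet_Icc

theorem eventually_aeCurve_ae {μ : Measure X} {P : X → Prop} (h : ∀ᵐ x ∂μ, P x) :
    ∀ᶠ γ in aeCurve μ, ∀ᵐ t : ℝ, t ∈ Icc 0 γ.len → P (γ.toFun t) := by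
  set N := toMeasurable μ {x | ¬ P x}
  have hN : MeasurableSet N := measurableSet_toMeasurable _ _
  have hfin : ∫⁻ x, N.indicator (fun _ => ∞) x ∂μ < ∞ := by
    simp [lintegral_indicator hN, N, measure_toMeasurable, ae_iff.1 h]
  filter_upwards [eventually_integral_ne_top (measurable_const.indicator hN) hfin] with γ hγ
  have hlt := ae_lt_top' ((measurable_const.indicator hN).comp_aemeasurable γ.aemeasurable) hγ
  rw [ae_restrict_iff' measurableSet_Icc] at hlt
  filter_upwards [hlt] with t ht htI
  by_contra hP
  simpa [indicator_of_mem (show γ.toFun t ∈ N from subset_toMeasurable _ _ hP)] using ht htI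

/-! ### Locally Lipschitz functions along curves -/

theorem ae_imp_of_forall_exists_mem_nhds {α : Type*} [TopologicalSpace α]
    [SecondCountableTopology α] [MeasurableSpace α] {ν : Measure α} {S : Set α} {P : α → Prop}
    (h : ∀ t ∈ S, ∃ V ∈ 𝓝 t, ∀ᵐ s ∂ν, s ∈ V → s ∈ S → P s) : ∀ᵐ s ∂ν, s ∈ S → P s := by
  refine measure_null_of_locally_null _ fun t ht => ?_
  obtain ⟨V, hV, hae⟩ := h t (Classical.not_imp.1 ht).1
  exact ⟨V ∩ {s | s ∈ S → P s}ᶜ, inter_mem (mem_nhdsWithin_of_mem_nhds hV) self_mem_nhdsWithin,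
    measure_mono_null (t := {s | s ∈ V → s ∈ S → P s}ᶜ) (fun s hs hP => hs.2 (hP hs.1)) hae⟩

section LocallyLipschitz

variable {Y : Type*} [MetricSpace Y] {u v : Y → ℝ} {Ω Ω' : Set Y}

theorem locLipOn_iff_locallyLipschitzOn : LocLipOn u Ω ↔ LocallyLipschitzOn Ω u := by
  constructor
  · intro h x hx
    obtain ⟨r, hr, K, hK⟩ := h x hx
    exact ⟨K, _, inter_mem_nhdsWithin Ω (ball_mem_nhds x hr), hK⟩
  · intro h x hx
    obtain ⟨K, t, ht, hK⟩ := h hx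
    obtain ⟨r, hr, hsub⟩ := Metric.mem_nhdsWithin_iff.1 ht
    exact ⟨r, hr, K, hK.mono (inter_comm Ω _ ▸ hsub)⟩

theorem LocLipOn.mono (h : LocLipOn u Ω) (hsub : Ω' ⊆ Ω) : LocLipOn u Ω' :=
  locLipOn_iff_locallyLipschitzOn.2 ((locLipOn_iff_locallyLipschitzOn.1 h).mono hsub)

theorem LocLipOn.continuousOn (h : LocLipOn u Ω) : ContinuousOn u Ω :=
  (locLipOn_iff_locallyLipschitzOn.1 h).continuousOn

theorem LocLipOn.comp_lipschitzWith (h : LocLipOn u Ω) {K : ℝ≥0} {Ψ : ℝ → ℝ}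
    (hΨ : LipschitzWith K Ψ) : LocLipOn (Ψ ∘ u) Ω := fun x hx =>
  let ⟨r, hr, L, hL⟩ := h x hx
  ⟨r, hr, K * L, hΨ.comp_lipschitzOnWith hL⟩

theorem LocLipOn.exists_lipschitzOnWith_comp_curve (h : LocLipOn u Ω) (γ : Curve Y) {p q : ℝ}
    (hpq : Icc p q ⊆ Icc 0 γ.len) (hΩ : MapsTo γ.toFun (Icc p q) Ω) :
    ∃ K, LipschitzOnWith K (u ∘ γ.toFun) (Icc p q) := by
  refine LocallyLipschitzOn.exists_lipschitzOnWith_of_compact isCompact_Icc fun t ht => ?_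
  obtain ⟨r, hr, K, hK⟩ := h _ (hΩ ht)
  have hcont : ContinuousWithinAt γ.toFun (Icc p q) t := (γ.continuousOn.mono hpq) t ht
  refine ⟨K * 1, γ.toFun ⁻¹' ball (γ.toFun t) r ∩ Icc p q,
    inter_mem (hcont (ball_mem_nhds _ hr)) self_mem_nhdsWithin, ?_⟩
  exact hK.comp (γ.lip.mono (inter_subset_right.trans hpq)) fun s hs => ⟨hΩ hs.2, hs.1⟩

theorem LocLipOn.absolutelyContinuousOnInterval_comp_curve (h : LocLipOn u Ω) (γ : Curve Y)
    {p q : ℝ} (hpq : p ≤ q) (hsub : Icc p q ⊆ Icc 0 γ.len) (hΩ : MapsTo γ.toFun (Icc p q) Ω) :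
    AbsolutelyContinuousOnInterval (u ∘ γ.toFun) p q := by
  obtain ⟨K, hK⟩ := h.exists_lipschitzOnWith_comp_curve γ hsub hΩ
  exact (uIcc_of_le hpq ▸ hK : LipschitzOnWith K _ (uIcc p q)).absolutelyContinuousOnInterval

theorem LocLipOn.ae_differentiableAt_comp_curve (h : LocLipOn u Ω) (hΩ : IsOpen Ω)
    (γ : Curve Y) :
    ∀ᵐ t : ℝ, t ∈ Ioo 0 γ.len ∩ γ.toFun ⁻¹' Ω → DifferentiableAt ℝ (u ∘ γ.toFun) t := by
  refine ae_imp_of_forall_exists_mem_nhds fun t ht => ?_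
  obtain ⟨p, q, hnhds, hsub, hmaps⟩ := γ.exists_Icc_mapsTo hΩ ht.1 ht.2
  have hpq : p ≤ q := (mem_of_mem_nhds hnhds).1.trans (mem_of_mem_nhds hnhds).2
  have hac := h.absolutelyContinuousOnInterval_comp_curve γ hpq hsub hmaps
  refine ⟨Icc p q, hnhds, ?_⟩
  filter_upwards [hac.ae_differentiableAt] with s hs hsI _
  exact hs (uIcc_of_le hpq ▸ hsI)

end LocallyLipschitz

/-! ### Upper gradients in derivative form -/

theorem abs_deriv_le_of_abs_sub_le {f F : ℝ → ℝ} {D d t : ℝ} (hf : HasDerivAt f D t)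
    (hF : HasDerivAt F d t) (h : ∀ᶠ s in 𝓝 t, |f s - f t| ≤ |F s - F t|) : |D| ≤ |d| := by
  rw [hasDerivAt_iff_tendsto_slope] at hf hF
  refine le_of_tendsto_of_tendsto hf.abs hF.abs ?_
  filter_upwards [nhdsWithin_le_nhds h] with s hs
  simp only [slope, vsub_eq_sub, smul_eq_mul, abs_mul]
  gcongr

theorem ae_ofReal_abs_deriv_le_of_le_lintegral {f : ℝ → ℝ} {h : ℝ → ℝ≥0∞} {p q : ℝ} (hpq : p ≤ q)
    (hmeas : AEMeasurable h (volume.restrict (Icc p q))) (hfin : ∫⁻ s in Icc p q, h s ≠ ∞)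
    (hle : ∀ a b, a ≤ b → Icc a b ⊆ Icc p q →
      ENNReal.ofReal |f a - f b| ≤ ∫⁻ s in Icc a b, h s) :
    ∀ᵐ t, t ∈ Ioo p q → ∀ D, HasDerivAt f D t → ENNReal.ofReal |D| ≤ h t := by
  set F : ℝ → ℝ := fun s => (h s).toReal
  have hint : IntegrableOn F (Icc p q) := integrable_toReal_of_lintegral_ne_top hmeas hfin
  have hII : ∀ a ∈ Icc p q, ∀ b ∈ Icc p q, IntervalIntegrable F volume a b := fun a ha b hb =>
    (hint.mono_set (uIcc_subset_Icc ha hb)).intervalIntegrable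
  have hp : p ∈ Icc p q := left_mem_Icc.2 hpq
  have habs : ∀ a b, a ≤ b → Icc a b ⊆ Icc p q → |f a - f b| ≤ ∫ s in a..b, F s := by
    intro a b hab hsub
    have htoReal : ∫ s in a..b, F s = (∫⁻ s in Icc a b, h s).toReal := by
      rw [intervalIntegral.integral_of_le hab, ← integral_Icc_eq_integral_Ioc]
      exact integral_toReal (hmeas.mono_set hsub)
        (ae_lt_top' (hmeas.mono_set hsub) (ne_top_of_le_ne_top hfin (lintegral_mono_set hsub)))
    rw [htoReal]
    exact (ENNReal.ofReal_le_iff_le_toReal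
      (ne_top_of_le_ne_top hfin (lintegral_mono_set hsub))).1 (hle a b hab hsub)
  filter_upwards [(hII p hp q (right_mem_Icc.2 hpq)).ae_hasDerivAt_integral] with t ht htI D hD
  have htIcc : t ∈ Icc p q := Ioo_subset_Icc_self htI
  have hF : HasDerivAt (fun s => ∫ r in p..s, F r) (F t) t :=
    ht (uIcc_of_le hpq ▸ htIcc) p (uIcc_of_le hpq ▸ hp)
  have hD' : |D| ≤ |F t| := abs_deriv_le_of_abs_sub_le hD hF <| by
    filter_upwards [Ioo_mem_nhds htI.1 htI.2] with s hs
    have hsI : s ∈ Icc p q := Ioo_subset_Icc_self hs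
    rw [intervalIntegral.integral_interval_sub_left (hII p hp s hsI) (hII p hp t htIcc)]
    rcases le_total s t with hst | hst
    · rw [intervalIntegral.integral_symm, abs_neg]
      exact (habs s t hst (Icc_subset_Icc hsI.1 htIcc.2)).trans (le_abs_self _)
    · rw [abs_sub_comm]
      exact (habs t s hst (Icc_subset_Icc htIcc.1 hsI.2)).trans (le_abs_self _)
  calc ENNReal.ofReal |D| ≤ ENNReal.ofReal (F t) :=
        ENNReal.ofReal_le_ofReal (hD'.trans_eq (abs_of_nonneg ENNReal.toReal_nonneg))
    _ ≤ h t := ENNReal.ofReal_toReal_le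

section DerivUpperGradient

variable {Y : Type*} [MetricSpace Y] [MeasurableSpace Y] {μ : Measure Y} {A B : Set Y}
  {v : Y → ℝ} {g g' : Y → ℝ≥0∞}

variable (μ) in
/-- The pointwise form of the upper gradient inequality in `A`: along `1`-a.e. curve `γ`, at a.e.
time spent in `A`, every derivative of `v ∘ γ` is bounded by `g`. It agrees with the integrated
inequality for locally Lipschitz `v`, and is better suited to localization and to the Leibniz
rule. -/
def IsDerivUpperGradientOn (v : Y → ℝ) (g : Y → ℝ≥0∞) (A : Set Y) : Prop :=
  ∀ᶠ γ in aeCurve μ, ∀ᵐ t, t ∈ Ioo 0 γ.len ∩ γ.toFun ⁻¹' A →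
    ∀ D, HasDerivAt (v ∘ γ.toFun) D t → ENNReal.ofReal |D| ≤ g (γ.toFun t)

namespace IsDerivUpperGradientOn

theorem mono_set (h : IsDerivUpperGradientOn μ v g A) (hBA : B ⊆ A) :
    IsDerivUpperGradientOn μ v g B := by
  filter_upwards [h] with γ hγ
  filter_upwards [hγ] with t ht htB using ht ⟨htB.1, hBA htB.2⟩

theorem mono (h : IsDerivUpperGradientOn μ v g A) (hle : ∀ x ∈ A, g x ≤ g' x) :
    IsDerivUpperGradientOn μ v g' A := by
  filter_upwards [h] with γ hγ
  filter_upwards [hγ] with t ht htA D hD using (ht htA D hD).trans (hle _ htA.2)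

theorem iInf {ι : Type*} [Countable ι] {G : ι → Y → ℝ≥0∞}
    (h : ∀ i, IsDerivUpperGradientOn μ v (G i) A) :
    IsDerivUpperGradientOn μ v (fun x => ⨅ i, G i x) A := by
  filter_upwards [eventually_countable_forall.2 h] with γ hγ
  filter_upwards [ae_all_iff.2 hγ] with t ht htA D hD using le_iInf fun i => ht i htA D hD

theorem min (h : IsDerivUpperGradientOn μ v g A) (h' : IsDerivUpperGradientOn μ v g' A) :
    IsDerivUpperGradientOn μ v (fun x => min (g x) (g' x)) A := by
  filter_upwards [h, h'] with γ hγ hγ'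
  filter_upwards [hγ, hγ'] with t ht ht' htA D hD using le_min (ht htA D hD) (ht' htA D hD)

theorem of_local [SecondCountableTopology Y]
    (h : ∀ x ∈ A, ∃ r > (0 : ℝ), IsDerivUpperGradientOn μ v g (A ∩ ball x r)) :
    IsDerivUpperGradientOn μ v g A := by
  choose! r hr hlocal using h
  obtain ⟨T, hTA, hT, hcover⟩ := TopologicalSpace.countable_cover_nhdsWithin
    fun x hx => mem_nhdsWithin_of_mem_nhds (t := A) (ball_mem_nhds x (hr x hx))
  filter_upwards [(eventually_countable_ball hT).2 fun x hx => hlocal x (hTA hx)] with γ hγ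
  filter_upwards [(ae_ball_iff hT).2 hγ] with t ht htA
  obtain ⟨x, hx, htx⟩ := mem_iUnion₂.1 (hcover htA.2)
  exact ht x hx ⟨htA.1, htA.2, htx⟩

theorem comp_lipschitzWith_one (h : IsDerivUpperGradientOn μ v g A) {Ψ : ℝ → ℝ}
    (hΨ : LipschitzWith 1 Ψ) (hv : LocLipOn v A) (hA : IsOpen A) :
    IsDerivUpperGradientOn μ (Ψ ∘ v) g A := by
  filter_upwards [h] with γ hγ
  filter_upwards [hγ, hv.ae_differentiableAt_comp_curve hA γ] with t ht hdiff htA D hD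
  have hle : |D| ≤ |deriv (v ∘ γ.toFun) t| :=
    abs_deriv_le_of_abs_sub_le hD (hdiff htA).hasDerivAt <| .of_forall fun s => by
      simpa [Real.dist_eq] using hΨ.dist_le_mul (v (γ.toFun s)) (v (γ.toFun t))
  exact (ENNReal.ofReal_le_ofReal hle).trans (ht htA _ (hdiff htA).hasDerivAt)

theorem isWeakUpperGradientOn (h : IsDerivUpperGradientOn μ v g A) (hA : IsOpen A)
    (hv : LocLipOn v A) (hg : AEMeasurable g μ) : IsWeakUpperGradientOn μ v g A := by
  suffices ∀ᶠ γ in aeCurve μ, γ.In A → UGIneq v g γ from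
    ⟨hg, (eventually_aeCurve_iff.1 this).mono fun γ hγ himp => hγ.2 (himp hγ.1)⟩
  filter_upwards [h] with γ hγ hin
  have hlen := γ.len_nonneg
  have hac := hv.absolutelyContinuousOnInterval_comp_curve γ hlen subset_rfl hin
  set f := v ∘ γ.toFun
  have hint : IntegrableOn (deriv f) (Ioc 0 γ.len) :=
    (intervalIntegrable_iff_integrableOn_Ioc_of_le hlen).1 hac.intervalIntegrable_deriv
  calc ENNReal.ofReal |f 0 - f γ.len| = ENNReal.ofReal |∫ t in (0 : ℝ)..γ.len, deriv f t| := by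
        rw [abs_sub_comm, hac.integral_deriv_eq_sub]
    _ ≤ ENNReal.ofReal (∫ t in (0 : ℝ)..γ.len, |deriv f t|) :=
        ENNReal.ofReal_le_ofReal (intervalIntegral.abs_integral_le_integral_abs hlen)
    _ = ∫⁻ t in Ioo 0 γ.len, ENNReal.ofReal |deriv f t| := by
        rw [intervalIntegral.integral_of_le hlen, restrict_Ioo_eq_restrict_Ioc,
          ofReal_integral_eq_lintegral_ofReal hint.abs (.of_forall fun s => abs_nonneg _)]
    _ ≤ ∫⁻ t in Ioo 0 γ.len, g (γ.toFun t) := by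
        refine lintegral_mono_ae ((ae_restrict_iff' measurableSet_Ioo).2 ?_)
        filter_upwards [hγ, hv.ae_differentiableAt_comp_curve hA γ] with t ht hdiff htI
        have htA := hin t (Ioo_subset_Icc_self htI)
        exact ht ⟨htI, htA⟩ _ (hdiff ⟨htI, htA⟩).hasDerivAt
    _ ≤ γ.integral g := lintegral_mono_set Ioo_subset_Icc_self

end IsDerivUpperGradientOn

theorem IsWeakUpperGradientOn.mono_set (h : IsWeakUpperGradientOn μ v g A) (hBA : B ⊆ A) :
    IsWeakUpperGradientOn μ v g B :=
  ⟨h.1, h.2.mono fun _ hγ => ⟨fun t ht => hBA (hγ.1 t ht), hγ.2⟩⟩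

theorem IsWeakUpperGradientOn.eventually_restrict (h : IsWeakUpperGradientOn μ v g A) :
    ∀ᶠ γ in aeCurve μ, ∀ p q, p ≤ q → Icc p q ⊆ Icc 0 γ.len → MapsTo γ.toFun (Icc p q) A →
      ENNReal.ofReal |v (γ.toFun p) - v (γ.toFun q)| ≤ ∫⁻ t in Icc p q, g (γ.toFun t) := by
  obtain ⟨-, ρ, hmeas, hfin, htop⟩ := h
  filter_upwards [eventually_integral_ne_top hmeas hfin] with γ hγ p q hpq hsub hmaps
  by_contra hcon
  have hin : (γ.restrict hpq hsub).In A := fun s hs =>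
    hmaps ⟨by linarith [hs.1], by linarith [show s ≤ q - p from hs.2]⟩
  have htop' := htop _ ⟨hin, fun hUG => hcon ((uGIneq_restrict_iff γ hpq hsub v g).1 hUG)⟩
  exact hγ (top_unique (htop'.ge.trans (γ.restrict_integral_le hpq hsub ρ)))

end DerivUpperGradient

section MinimalUpperGradient

variable {μ : Measure X} {A : Set X} {v : X → ℝ} {g : X → ℝ≥0∞}

theorem IsWeakUpperGradientOn.isDerivUpperGradientOn_of_lintegral_lt_top (hA : IsOpen A)
    (h : IsWeakUpperGradientOn μ v g A) (hfin : ∫⁻ x in A, g x ∂μ < ∞) :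
    IsDerivUpperGradientOn μ v g A := by
  set g' := h.1.mk g
  have hmk : ∀ᵐ x ∂μ, g x = g' x := h.1.ae_eq_mk
  have hfin' : ∫⁻ x, A.indicator g' x ∂μ < ∞ := by
    rwa [lintegral_indicator hA.measurableSet,
      ← lintegral_congr_ae (ae_restrict_of_ae hmk)]
  filter_upwards [h.eventually_restrict, eventually_aeCurve_ae hmk, eventually_integral_ne_top
    (h.1.measurable_mk.indicator hA.measurableSet) hfin'] with γ hUG hae hγ
  refine ae_imp_of_forall_exists_mem_nhds fun t ht => ?_
  obtain ⟨p, q, hnhds, hsub, hmaps⟩ := γ.exists_Icc_mapsTo hA ht.1 ht.2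
  have hpq : p ≤ q := (mem_of_mem_nhds hnhds).1.trans (mem_of_mem_nhds hnhds).2
  have hcongr : g ∘ γ.toFun =ᵐ[volume.restrict (Icc p q)] g' ∘ γ.toFun :=
    (ae_restrict_iff' measurableSet_Icc).2 <| hae.mono fun s hs hsI => hs (hsub hsI)
  have hmeas : AEMeasurable (fun s => g (γ.toFun s)) (volume.restrict (Icc p q)) :=
    (h.1.measurable_mk.comp_aemeasurable (γ.aemeasurable.mono_set hsub)).congr hcongr.symm
  have hlt : ∫⁻ s in Icc p q, g (γ.toFun s) ≠ ∞ := by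
    refine ne_top_of_le_ne_top hγ ((lintegral_congr_ae hcongr).trans_le ?_)
    refine le_trans (setLIntegral_mono' measurableSet_Icc fun s hs => ?_) (lintegral_mono_set hsub)
    rw [indicator_of_mem (hmaps hs), Function.comp_apply]
  refine ⟨Ioo p q, Ioo_mem_nhds (Icc_mem_nhds_iff.1 hnhds).1 (Icc_mem_nhds_iff.1 hnhds).2, ?_⟩
  filter_upwards [ae_ofReal_abs_deriv_le_of_le_lintegral (f := v ∘ γ.toFun) hpq hmeas hlt
    fun a b hab hab' => hUG a b hab (hab'.trans hsub) (hmaps.mono_left hab')] with s hs hsI _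
  exact hs hsI

variable [SecondCountableTopology X]

theorem IsWeakUpperGradientOn.isDerivUpperGradientOn (hA : IsOpen A)
    (h : IsWeakUpperGradientOn μ v g A) (hloc : LIntegrableLocOn μ g A) :
    IsDerivUpperGradientOn μ v g A := by
  refine .of_local fun x hx => ?_
  obtain ⟨r, hr, hfin⟩ := hloc x hx
  exact ⟨r, hr, (h.mono_set inter_subset_left).isDerivUpperGradientOn_of_lintegral_lt_top
    (hA.inter isOpen_ball) hfin⟩

theorem IsDerivUpperGradientOn.exists_isMinimalWUG (hA : IsOpen A) (hv : LocLipOn v A)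
    (hg : AEMeasurable g μ) (h : IsDerivUpperGradientOn μ v g A)
    (hfin : ∫⁻ x in A, g x ∂μ < ∞) :
    ∃ g₀, IsMinimalWUG μ v g₀ A ∧ ∫⁻ x in A, g₀ x ∂μ ≤ ∫⁻ x in A, g x ∂μ := by
  set S : Set ℝ≥0∞ :=
    {a | ∃ k, AEMeasurable k μ ∧ IsDerivUpperGradientOn μ v k A ∧ ∫⁻ x in A, k x ∂μ = a}
  obtain ⟨a, -, ha, haS⟩ :=
    exists_seq_tendsto_sInf (S := S) ⟨_, g, hg, h, rfl⟩ (OrderBot.bddBelow S)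
  choose G hGmeas hG hGa using haS
  set g₀ : X → ℝ≥0∞ := fun x => ⨅ k, G k x
  have hg₀meas : AEMeasurable g₀ μ := AEMeasurable.iInf hGmeas
  have hg₀ : IsDerivUpperGradientOn μ v g₀ A := .iInf hG
  have hleast : ∀ k, AEMeasurable k μ → IsDerivUpperGradientOn μ v k A →
      ∫⁻ x in A, g₀ x ∂μ ≤ ∫⁻ x in A, k x ∂μ := fun k hk hk' =>
    (ge_of_tendsto' ha fun i => hGa i ▸ lintegral_mono fun x => iInf_le _ i).trans
      (sInf_le ⟨k, hk, hk', rfl⟩)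
  refine ⟨g₀, ⟨hg₀.isWeakUpperGradientOn hA hv hg₀meas, fun g' hg' hloc => ?_⟩,
    hleast g hg h⟩
  have hmin := hleast _ (hg₀meas.min hg'.1) (hg₀.min (hg'.isDerivUpperGradientOn hA hloc))
  have heq := ae_eq_of_ae_le_of_lintegral_le (.of_forall fun x => min_le_left (g₀ x) (g' x))
    (ne_top_of_le_ne_top hfin.ne
      ((lintegral_mono fun x => min_le_left _ _).trans (hleast g hg h))) hg₀meas.restrict hmin
  filter_upwards [heq] with x hx
  exact min_eq_left_iff.1 hx

end MinimalUpperGradient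

/-! ### Approximation in total variation -/

/-- A competitor for the total variation in `Ω` of a `[0, 1]`-valued function: a function `v` with
values in `[0, 1]`, locally Lipschitz on `Ω`, with an upper gradient `g` in derivative form. -/
structure IsUnitGradientPair (μ : Measure X) (v : X → ℝ) (g : X → ℝ≥0∞) (Ω : Set X) : Prop where
  mem_Icc : ∀ x, v x ∈ Icc (0 : ℝ) 1
  locLipOn : LocLipOn v Ω
  aemeasurable : AEMeasurable g μ
  isDerivUpperGradientOn : IsDerivUpperGradientOn μ v g Ω

theorem tendsto_setLIntegral_inter_of_local [SecondCountableTopology X] {μ : Measure X}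
    {A B : Set X} {f : ℕ → X → ℝ≥0∞} (hf : ∀ i x, f i x ≤ 1)
    (h : ∀ x ∈ A, ∃ r > (0 : ℝ), Tendsto (fun i => ∫⁻ y in A ∩ ball x r, f i y ∂μ) atTop (𝓝 0))
    (hB : μ B ≠ ∞) : Tendsto (fun i => ∫⁻ y in A ∩ B, f i y ∂μ) atTop (𝓝 0) := by
  rcases A.eq_empty_or_nonempty with rfl | hA
  · simp
  choose! r hr hlim using h
  obtain ⟨T, hTA, hT, hcover⟩ := TopologicalSpace.countable_cover_nhdsWithin
    fun x hx => mem_nhdsWithin_of_mem_nhds (t := A) (ball_mem_nhds x (hr x hx))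
  obtain ⟨c, rfl⟩ := hT.exists_eq_range (nonempty_iff_ne_empty.2 fun hT0 => by
    simp [hT0, hA.ne_empty] at hcover)
  set D : ℕ → Set X := disjointed fun n => ball (c n) (r (c n))
  have hD : ∀ n, MeasurableSet (D n) := .disjointed fun n => measurableSet_ball
  have hAD : A ∩ B ⊆ ⋃ n, D n := by
    rw [iUnion_disjointed]
    exact inter_subset_left.trans (by simpa using hcover)
  have hsplit : ∀ k : X → ℝ≥0∞,
      ∫⁻ y in A ∩ B, k y ∂μ = ∫⁻ n, ∫⁻ y in D n ∩ (A ∩ B), k y ∂μ ∂Measure.count := fun k => by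
    rw [lintegral_count, ← inter_eq_self_of_subset_right hAD,
      ← Measure.restrict_restrict (.iUnion hD), lintegral_iUnion hD (disjoint_disjointed _)]
    simp_rw [Measure.restrict_restrict (hD _), inter_eq_self_of_subset_right hAD]
  have hbound : ∫⁻ n, ∫⁻ _ in D n ∩ (A ∩ B), 1 ∂μ ∂Measure.count ≠ ∞ := by
    rw [← hsplit fun _ => 1, setLIntegral_one]
    exact measure_ne_top_of_subset inter_subset_right hB
  simp_rw [hsplit]
  rw [← lintegral_zero (μ := Measure.count (α := ℕ))]
  refine tendsto_lintegral_of_dominated_convergence _ (fun i => .of_discrete)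
    (fun i => .of_forall fun n => lintegral_mono (hf i)) hbound (.of_forall fun n => ?_)
  refine tendsto_of_tendsto_of_tendsto_of_le_of_le tendsto_const_nhds
    (hlim (c n) (hTA (mem_range_self n))) (fun i => zero_le) fun i => lintegral_mono_set ?_
  exact fun x hx => ⟨hx.2.1, disjointed_subset _ n hx.1⟩

theorem ofReal_abs_sub_le_one {a b : ℝ} (ha : a ∈ Icc (0 : ℝ) 1) (hb : b ∈ Icc (0 : ℝ) 1) :
    ENNReal.ofReal |a - b| ≤ 1 :=
  ENNReal.ofReal_le_one.2 (abs_le.2 ⟨by linarith [ha.1, hb.2], by linarith [ha.2, hb.1]⟩)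

section Approximation

variable [SecondCountableTopology X] {μ : Measure X} {Ω : Set X} {u : X → ℝ} {c : ℝ≥0∞}

theorem exists_isUnitGradientPair_of_tvOpen_lt (hΩ : IsOpen Ω) (hu : ∀ x, u x ∈ Icc (0 : ℝ) 1)
    (h : tvOpen μ Ω u < c) {B : Set X} (hB : μ B ≠ ∞) {τ : ℝ≥0∞} (hτ : 0 < τ) :
    ∃ v g, IsUnitGradientPair μ v g Ω ∧ ∫⁻ x in Ω, g x ∂μ < c ∧
      ∫⁻ x in Ω ∩ B, ENNReal.ofReal |v x - u x| ∂μ < τ := by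
  simp only [tvOpen, iInf_lt_iff] at h
  obtain ⟨v, g, hv, hg, hconv, hlim⟩ := h
  set Ψ : ℝ → ℝ := fun a => projIcc (0 : ℝ) 1 zero_le_one a
  have hΨ : LipschitzWith 1 Ψ :=
    mul_one (1 : ℝ≥0) ▸ (LipschitzWith.subtype_val _).comp (LipschitzWith.projIcc zero_le_one)
  have hΨmem : ∀ a, Ψ a ∈ Icc (0 : ℝ) 1 := fun a => (projIcc _ _ _ a).2
  have hle : ∀ i x, |Ψ (v i x) - u x| ≤ |v i x - u x| := fun i x => by
    have hfix : Ψ (u x) = u x := congrArg Subtype.val (projIcc_of_mem zero_le_one (hu x))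
    simpa [Real.dist_eq, hfix] using hΨ.dist_le_mul (v i x) (u x)
  have htrunc : Tendsto (fun i => ∫⁻ x in Ω ∩ B, ENNReal.ofReal |Ψ (v i x) - u x| ∂μ)
      atTop (𝓝 0) := by
    refine tendsto_setLIntegral_inter_of_local
      (fun i x => ofReal_abs_sub_le_one (hΨmem _) (hu x)) (fun x hx => ?_) hB
    obtain ⟨r, hr, hlim⟩ := hconv x hx
    exact ⟨r, hr, tendsto_of_tendsto_of_tendsto_of_le_of_le tendsto_const_nhds hlim
      (fun i => zero_le) fun i => lintegral_mono fun y => ENNReal.ofReal_le_ofReal (hle i y)⟩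
  obtain ⟨i, hi, hiτ⟩ := ((frequently_lt_of_liminf_lt (by isBoundedDefault) hlim).and_eventually
    (htrunc.eventually_lt_const hτ)).exists
  have hgrad : IsDerivUpperGradientOn μ (v i) (g i) Ω :=
    (hg i).1.isDerivUpperGradientOn hΩ fun x _ => ⟨1, one_pos,
      (lintegral_mono_set inter_subset_left).trans_lt (hi.trans_le le_top)⟩
  exact ⟨Ψ ∘ v i, g i, ⟨fun x => hΨmem _, (hv i).comp_lipschitzWith hΨ, (hg i).1.1,
    hgrad.comp_lipschitzWith_one hΨ (hv i) hΩ⟩, hi, hiτ⟩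

theorem tvOpen_le_of_forall_exists_isUnitGradientPair [WeaklyLocallyCompactSpace X]
    (hΩ : IsOpen Ω) (hc : c < ∞)
    (h : ∀ K, IsCompact K → ∀ δ : ℝ≥0∞, 0 < δ → ∃ v g, IsUnitGradientPair μ v g Ω ∧
      ∫⁻ x in Ω, g x ∂μ ≤ c ∧ ∫⁻ x in Ω ∩ K, ENNReal.ofReal |v x - u x| ∂μ ≤ δ) :
    tvOpen μ Ω u ≤ c := by
  let Q := CompactExhaustion.choice X
  choose v g hpair hgc hδ using fun n : ℕ =>
    h (Q n) (Q.isCompact n) ((n : ℝ≥0∞) + 1)⁻¹ (ENNReal.inv_pos.2 (by finiteness))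
  choose g₀ hg₀ hg₀le using fun n => (hpair n).isDerivUpperGradientOn.exists_isMinimalWUG hΩ
    (hpair n).locLipOn (hpair n).aemeasurable ((hgc n).trans_lt hc)
  have hconv : L1LocConv μ Ω v u := fun x _ => by
    obtain ⟨n₀, hn₀⟩ := Q.exists_mem_nhds x
    obtain ⟨r, hr, hball⟩ := Metric.mem_nhds_iff.1 hn₀
    have hzero : Tendsto (fun n : ℕ => ((n : ℝ≥0∞) + 1)⁻¹) atTop (𝓝 0) := by
      simpa using (tendsto_add_atTop_iff_nat 1).2 ENNReal.tendsto_inv_nat_nhds_zero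
    refine ⟨r, hr, tendsto_of_tendsto_of_tendsto_of_le_of_le' tendsto_const_nhds hzero
      (.of_forall fun n => zero_le) ?_⟩
    filter_upwards [eventually_ge_atTop n₀] with n hn
    exact (lintegral_mono_set (by gcongr; exact hball.trans (Q.subset hn))).trans (hδ n)
  calc tvOpen μ Ω u ≤ liminf (fun n => ∫⁻ x in Ω, g₀ n x ∂μ) atTop :=
        iInf₂_le_of_le v g₀ (iInf₂_le_of_le (fun n => (hpair n).locLipOn) hg₀ (iInf_le _ hconv))
    _ ≤ liminf (fun _ : ℕ => c) atTop :=
        liminf_le_liminf (.of_forall fun n => (hg₀le n).trans (hgc n))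
    _ = c := liminf_const c

end Approximation

/-! ### Doubling measures -/

section Doubling

variable {Y : Type*} [MetricSpace Y] [MeasurableSpace Y] {μ : Measure Y} {Cd : ℝ}

theorem Doubling.isLocallyFiniteMeasure (h : Doubling μ Cd) : IsLocallyFiniteMeasure μ :=
  ⟨fun x => ⟨ball x 1, ball_mem_nhds _ one_pos, (h.2 x 1 one_pos).2.2⟩⟩

theorem Doubling.measure_ball_pow_mul_le (h : Doubling μ Cd) (x : Y) (n : ℕ) {r : ℝ}
    (hr : 0 < r) : μ (ball x (2 ^ n * r)) ≤ ENNReal.ofReal Cd ^ n * μ (ball x r) := by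
  induction n with
  | zero => simp
  | succ n ih =>
    rw [pow_succ', pow_succ', mul_assoc, mul_assoc]
    exact (h.2 x (2 ^ n * r) (by positivity)).2.1.trans (by gcongr)

theorem Doubling.exists_le_measure_ball (h : Doubling μ Cd) (x : Y) (R : ℝ) {r : ℝ} (hr : 0 < r) :
    ∃ m > 0, ∀ y ∈ closedBall x R, m ≤ μ (ball y r) := by
  rcases lt_or_ge R 0 with hR | hR
  · exact ⟨1, one_pos, by simp [closedBall_eq_empty.2 hR]⟩
  obtain ⟨n, hn⟩ := pow_unbounded_of_one_lt ((2 * R + 1) / r) one_lt_two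
  rw [div_lt_iff₀ hr] at hn
  have hpos : 0 < μ (ball x (R + 1)) := by
    simpa [mul_div_cancel₀] using (h.2 x ((R + 1) / 2) (by positivity)).1
  refine ⟨μ (ball x (R + 1)) / ENNReal.ofReal Cd ^ n,
    ENNReal.div_pos hpos.ne' (by finiteness), fun y hy => ?_⟩
  refine ENNReal.div_le_of_le_mul' (le_trans (measure_mono (ball_subset_ball' ?_))
    (h.measure_ball_pow_mul_le y n hr))
  linarith [mem_closedBall'.1 hy]

theorem Doubling.totallyBounded_closedBall [BorelSpace Y] (h : Doubling μ Cd) (x : Y) (R : ℝ) :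
    TotallyBounded (closedBall x R) := by
  refine Metric.totallyBounded_iff.2 fun ε hε => ?_
  by_contra! hcon
  have : Std.Symm fun y z : Y => ε ≤ dist y z := ⟨fun y z h => dist_comm y z ▸ h⟩
  obtain ⟨c, hcmem, hsep⟩ := exists_seq_of_forall_finset_exists' (· ∈ closedBall x R)
    (fun y z => ε ≤ dist y z) fun s _ => by
      obtain ⟨y, hy, hy'⟩ := not_subset.1 (hcon s s.finite_toSet)
      refine ⟨y, hy, fun z hz => ?_⟩
      by_contra! hlt
      exact hy' (mem_iUnion₂.2 ⟨z, hz, mem_ball'.2 hlt⟩)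
  obtain ⟨m, hm, hle⟩ := h.exists_le_measure_ball x R (half_pos hε)
  have hdisj : Pairwise (Function.onFun Disjoint fun k => ball (c k) (ε / 2)) := fun i j hij =>
    ball_disjoint_ball ((add_halves ε).le.trans (hsep hij))
  have hR : 0 ≤ R := dist_nonneg.trans (mem_closedBall.1 (hcmem 0))
  have hfin : μ (⋃ k, ball (c k) (ε / 2)) ≠ ∞ := measure_ne_top_of_subset
    (iUnion_subset fun k => ball_subset_ball' (by linarith [mem_closedBall.1 (hcmem k)]))
    (h.2 x (R + ε) (by positivity)).2.2.ne
  refine Set.infinite_univ (α := ℕ) ((Measure.finite_const_le_meas_of_disjoint_iUnion μ hm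
    (fun k => measurableSet_ball) hdisj hfin).subset fun k _ => hle _ (hcmem k))

theorem Doubling.properSpace (h : Doubling μ Cd) [BorelSpace Y] [CompleteSpace Y] :
    ProperSpace Y :=
  ⟨fun x R => isCompact_iff_totallyBounded_isComplete.2
    ⟨h.totallyBounded_closedBall x R, isClosed_closedBall.isComplete⟩⟩

end Doubling

/-! ### Coarse paths and their limits -/

section CoarsePath

variable {Y : Type*} [MetricSpace Y] [MeasurableSpace Y] {S S' K K' : Set Y} {c c' : Y → ℝ≥0∞}
  {δ δ' L : ℝ} {x y : Y} {γ : ℝ → Y}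

/-- A path in `S` from a point of `K` to `x` during `[0, L]` that need not be continuous, but is
`1`-Lipschitz up to an additive error `δ`. Such paths exist in spaces without any rectifiable
curves, and subconverge to `1`-Lipschitz curves as `δ → 0`. -/
structure IsCoarsePath (S K : Set Y) (δ : ℝ) (x : Y) (L : ℝ) (γ : ℝ → Y) : Prop where
  len_nonneg : 0 ≤ L
  measurable : Measurable γ
  zero_mem : γ 0 ∈ K
  eq_of_le : ∀ t, L ≤ t → γ t = x
  mem : ∀ t, γ t ∈ S
  dist_le : ∀ s t, s ≤ t → dist (γ s) (γ t) ≤ t - s + δ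

namespace IsCoarsePath

theorem mono (h : IsCoarsePath S K δ x L γ) (hS : S ⊆ S') (hK : K ⊆ K') (hδ : δ ≤ δ') :
    IsCoarsePath S' K' δ' x L γ where
  __ := h
  zero_mem := hK h.zero_mem
  mem t := hS (h.mem t)
  dist_le s t hst := (h.dist_le s t hst).trans (by gcongr)

theorem const (hδ : 0 ≤ δ) (hxK : x ∈ K) (hxS : x ∈ S) : IsCoarsePath S K δ x 0 fun _ => x where
  len_nonneg := le_rfl
  measurable := measurable_const
  zero_mem := hxK
  eq_of_le _ _ := rfl
  mem _ := hxS
  dist_le s t hst := by rw [dist_self]; linarith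

theorem extend (h : IsCoarsePath S K δ x L γ) (hy : y ∈ S) (hxy : dist x y ≤ δ) :
    IsCoarsePath S K δ y (L + dist x y) fun t => if t < L + dist x y then γ t else y where
  len_nonneg := add_nonneg h.len_nonneg dist_nonneg
  measurable := .ite measurableSet_Iio h.measurable measurable_const
  zero_mem := by
    split_ifs with hpos
    · exact h.zero_mem
    · have hL := h.len_nonneg
      have hd := dist_nonneg (x := x) (y := y)
      rw [← dist_eq_zero.1 (show dist x y = 0 by linarith), ← h.eq_of_le 0 (by linarith)]
      exact h.zero_mem
  eq_of_le t ht := if_neg ht.not_gt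
  mem t := by
    split_ifs
    exacts [h.mem t, hy]
  dist_le s t hst := by
    split_ifs with hs ht ht
    · exact h.dist_le s t hst
    · rcases lt_or_ge s L with hsL | hsL
      · have hsx := h.eq_of_le L le_rfl ▸ h.dist_le s L hsL.le
        linarith [dist_triangle (γ s) x y]
      · rw [h.eq_of_le s hsL]
        linarith
    · linarith
    · rw [dist_self]
      linarith [dist_nonneg (x := x) (y := y)]

theorem lintegral_extend_le (h : IsCoarsePath S K δ x L γ) (c : Y → ℝ≥0∞) (y : Y) :
    ∫⁻ t in Ico 0 (L + dist x y), c (if t < L + dist x y then γ t else y) ≤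
      (∫⁻ t in Ico 0 L, c (γ t)) + c x * ENNReal.ofReal (dist x y) := by
  rw [← Ico_union_Ico_eq_Ico h.len_nonneg (le_add_of_nonneg_right dist_nonneg)]
  refine (lintegral_union_le _ _ _).trans (add_le_add (le_of_eq ?_) (le_of_eq ?_))
  · refine setLIntegral_congr_fun measurableSet_Ico fun t ht => ?_
    simp only [if_pos (ht.2.trans_le (le_add_of_nonneg_right dist_nonneg))]
  · rw [setLIntegral_congr_fun (g := fun _ => c x) measurableSet_Ico fun t ht => ?_]
    · simp
    · simp only [if_pos ht.2, h.eq_of_le t ht.1]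

theorem len_le (h : IsCoarsePath S K δ x L γ) {κ a : ℝ≥0∞} (hκ : κ ≠ 0) (hκc : ∀ y ∈ S, κ ≤ c y)
    (ha : a ≠ ∞) (hca : ∫⁻ t in Ico 0 L, c (γ t) ≤ a) : L ≤ (a / κ).toReal := by
  have hκL : ENNReal.ofReal L * κ ≤ a := by
    refine le_trans (le_of_eq ?_) ((lintegral_mono fun t => hκc _ (h.mem t)).trans hca)
    simp [mul_comm]
  exact (ENNReal.ofReal_le_iff_le_toReal (ENNReal.div_ne_top ha hκ)).1
    ((ENNReal.le_div_iff_mul_le (.inl hκ) (.inr ha)).2 hκL)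

end IsCoarsePath

variable (S K c δ x) in
/-- The least `c`-weighted length of a `δ`-coarse path in `S` from `K` to `x`. -/
def coarseDist : ℝ≥0∞ :=
  ⨅ (L : ℝ) (γ : ℝ → Y) (_ : IsCoarsePath S K δ x L γ), ∫⁻ t in Ico 0 L, c (γ t)

theorem coarseDist_anti (hS : S ⊆ S') (hK : K ⊆ K') (hc : ∀ y, c' y ≤ c y) (hδ : δ ≤ δ') (x : Y) :
    coarseDist S' K' c' δ' x ≤ coarseDist S K c δ x :=
  iInf₂_mono fun _ _ => le_iInf fun h =>
    iInf_le_of_le (h.mono hS hK hδ) (lintegral_mono fun _ => hc _)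

theorem coarseDist_eq_zero (hδ : 0 ≤ δ) (hxK : x ∈ K) (hxS : x ∈ S) : coarseDist S K c δ x = 0 :=
  le_zero_iff.1 <| iInf₂_le_of_le 0 (fun _ => x) <| iInf_le_of_le (.const hδ hxK hxS) (by simp)

theorem coarseDist_eq_top (hx : x ∉ S) : coarseDist S K c δ x = ∞ := by
  simp only [coarseDist, iInf_eq_top]
  exact fun L γ h => (hx (h.eq_of_le L le_rfl ▸ h.mem L)).elim

theorem coarseDist_le_add (hy : y ∈ S) (hxy : dist x y ≤ δ) :
    coarseDist S K c δ y ≤ coarseDist S K c δ x + c x * ENNReal.ofReal (dist x y) := by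
  conv_rhs => simp only [coarseDist, ENNReal.iInf_add]
  exact le_iInf₂ fun L γ => le_iInf fun h =>
    iInf₂_le_of_le _ _ (iInf_le_of_le (h.extend hy hxy) (h.lintegral_extend_le c y))

end CoarsePath

section Limit

variable {Y : Type*} [MetricSpace Y] {S : Set Y}

theorem exists_subseq_tendsto_of_dist_le_add (hS : IsCompact S) {γ : ℕ → ℝ → Y}
    (hmem : ∀ j t, γ j t ∈ S) {δ : ℕ → ℝ} (hδ : Tendsto δ atTop (𝓝 0))
    (hdist : ∀ j s t, s ≤ t → dist (γ j s) (γ j t) ≤ t - s + δ j) :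
    ∃ (Γ : ℝ → Y) (φ : ℕ → ℕ), StrictMono φ ∧ LipschitzWith 1 Γ ∧
      ∀ t, Tendsto (fun j => γ (φ j) t) atTop (𝓝 (Γ t)) := by
  obtain ⟨ψ, -, φ, hφ, hψ⟩ := (isCompact_univ_pi fun _ : ℚ => hS).isSeqCompact
    (x := fun j (q : ℚ) => γ j q) fun j q _ => hmem j q
  have hδφ : Tendsto (δ ∘ φ) atTop (𝓝 0) := hδ.comp hφ.tendsto_atTop
  have hcauchy : ∀ t, CauchySeq fun j => γ (φ j) t := fun t => by
    refine Metric.cauchySeq_iff'.2 fun ε hε => ?_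
    obtain ⟨q, htq, hqε⟩ := exists_rat_btwn (show t < t + ε / 8 by linarith)
    have hq : CauchySeq fun j => γ (φ j) q := (tendsto_pi_nhds.1 hψ q).cauchySeq
    obtain ⟨N, hN⟩ := Metric.cauchySeq_iff.1 hq (ε / 4) (by positivity)
    obtain ⟨M, hM⟩ := eventually_atTop.1 (hδφ.eventually_lt_const (show 0 < ε / 8 by positivity))
    refine ⟨max N M, fun n hn => ?_⟩
    have hnear : ∀ j ≥ max N M, dist (γ (φ j) t) (γ (φ j) q) ≤ ε / 4 := fun j hj =>
      (hdist (φ j) t q htq.le).trans (by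
        have := hM j ((le_max_right _ _).trans hj)
        simp only [Function.comp_apply] at this
        linarith)
    have hNM := hN n ((le_max_left _ _).trans hn) (max N M) (le_max_left _ _)
    have hmid := dist_comm (γ (φ (max N M)) t) _ ▸ hnear (max N M) le_rfl
    linarith [hnear n hn, dist_triangle4 (γ (φ n) t) (γ (φ n) q) (γ (φ (max N M)) q)
      (γ (φ (max N M)) t)]
  choose Γ _ hΓ using fun t =>
    cauchySeq_tendsto_of_isComplete hS.isComplete (fun j => hmem (φ j) t) (hcauchy t)
  have hle : ∀ s t, s ≤ t → dist (Γ s) (Γ t) ≤ t - s := fun s t hst => by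
    simpa using le_of_tendsto_of_tendsto' ((hΓ s).dist (hΓ t)) (hδφ.const_add (t - s))
      fun j => hdist (φ j) s t hst
  refine ⟨Γ, φ, hφ, LipschitzWith.mk_one fun s t => ?_, hΓ⟩
  rcases le_total s t with hst | hst
  · exact (hle s t hst).trans (dist_comm s t ▸ le_abs_self (t - s))
  · exact dist_comm (Γ s) (Γ t) ▸ (hle t s hst).trans (le_abs_self (s - t))

end Limit

theorem setLIntegral_le_of_tendsto_of_lowerSemicontinuous {f : X → ℝ≥0∞}
    (hf : LowerSemicontinuous f) {γ : ℕ → ℝ → X} {Γ : ℝ → X} (hγ : ∀ j, Measurable (γ j))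
    (hΓ : ∀ t, Tendsto (fun j => γ j t) atTop (𝓝 (Γ t))) {L : ℕ → ℝ} {ℓ : ℝ}
    (hL : Tendsto L atTop (𝓝 ℓ)) {k : ℕ → ℝ≥0∞} (hk : Tendsto k atTop (𝓝 ∞)) {a : ℝ≥0∞}
    (h : ∀ j, ∫⁻ t in Ico 0 (L j), min (f (γ j t)) (k j) ≤ a) :
    ∫⁻ t in Icc 0 ℓ, f (Γ t) ≤ a := by
  set F : ℕ → ℝ → ℝ≥0∞ := fun j => (Ico 0 (L j)).indicator fun t => min (f (γ j t)) (k j)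
  have hF : ∀ j, Measurable (F j) := fun j =>
    ((hf.measurable.comp (hγ j)).min measurable_const).indicator measurableSet_Ico
  have hliminf : ∀ t, (Ico 0 ℓ).indicator (fun t => f (Γ t)) t ≤
      liminf (fun j => F j t) atTop := fun t => by
    refine indicator_apply_le' (fun ht => ?_) fun _ => zero_le
    refine le_of_forall_lt fun b hb => ?_
    obtain ⟨b', hbb', hb'⟩ := exists_between hb
    refine hbb'.trans_le (le_liminf_of_le (by isBoundedDefault) ?_)
    filter_upwards [(hΓ t).eventually (hf (Γ t) b' hb'), hL.eventually_const_lt ht.2,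
      hk.eventually_const_lt (hb'.trans_le le_top)] with j hfj hLj hkj
    simp only [F, indicator_of_mem (show t ∈ Ico 0 (L j) from ⟨ht.1, hLj⟩)]
    exact le_min hfj.le hkj.le
  calc ∫⁻ t in Icc 0 ℓ, f (Γ t) = ∫⁻ t, (Ico 0 ℓ).indicator (fun t => f (Γ t)) t := by
        rw [lintegral_indicator measurableSet_Ico, restrict_Ico_eq_restrict_Icc]
    _ ≤ liminf (fun j => ∫⁻ t, F j t) atTop :=
        (lintegral_mono hliminf).trans (lintegral_liminf_le hF)
    _ ≤ liminf (fun _ : ℕ => a) atTop := liminf_le_liminf (.of_forall fun j => by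
        simpa only [F, lintegral_indicator measurableSet_Ico] using h j)
    _ = a := liminf_const a

theorem exists_curve_of_isCoarsePath {S K : Set X} (hS : IsCompact S) (hK : IsClosed K)
    {f : X → ℝ≥0∞} (hf : LowerSemicontinuous f) (hf0 : ∀ y, 0 < f y) {x : X} {a : ℝ≥0∞}
    (ha : a ≠ ∞) {δ : ℕ → ℝ} (hδ : Tendsto δ atTop (𝓝 0)) {L : ℕ → ℝ} {γ : ℕ → ℝ → X}
    (hγ : ∀ j, IsCoarsePath S K (δ j) x (L j) (γ j))
    (hfa : ∀ j : ℕ, ∫⁻ t in Ico 0 (L j), min (f (γ j t)) (j + 1) ≤ a) :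
    ∃ Γ : Curve X, Γ.toFun 0 ∈ K ∧ Γ.toFun Γ.len = x ∧ Γ.integral f ≤ a := by
  obtain ⟨y, -, hmin⟩ := (hf.lowerSemicontinuousOn S).exists_isMinOn ⟨_, (hγ 0).mem 0⟩ hS
  have hLmem : ∀ j, L j ∈ Icc 0 (a / min (f y) 1).toReal := fun j =>
    ⟨(hγ j).len_nonneg, (hγ j).len_le (lt_min (hf0 y) one_pos).ne'
      (fun z hz => min_le_min (hmin hz) le_add_self) ha (hfa j)⟩
  obtain ⟨ℓ, hℓ, φ, hφ, hLφ⟩ := isCompact_Icc.tendsto_subseq hLmem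
  have hδφ := hδ.comp hφ.tendsto_atTop
  obtain ⟨Γ, ψ, hψ, hΓlip, hΓ⟩ := exists_subseq_tendsto_of_dist_le_add hS
    (fun j => (hγ (φ j)).mem) hδφ fun j => (hγ (φ j)).dist_le
  have hLψ := hLφ.comp hψ.tendsto_atTop
  have hδψ := hδφ.comp hψ.tendsto_atTop
  have hend : Γ ℓ = x := by
    refine dist_le_zero.1 (le_of_tendsto_of_tendsto' ((hΓ ℓ).dist tendsto_const_nhds)
      (by simpa using (hLψ.sub_const ℓ).abs.add hδψ) fun j => ?_)
    set i := φ (ψ j)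
    calc dist (γ i ℓ) x = dist (γ i ℓ) (γ i (max ℓ (L i))) := by
          rw [(hγ i).eq_of_le _ (le_max_right _ _)]
      _ ≤ max ℓ (L i) - ℓ + δ i := (hγ i).dist_le _ _ (le_max_left _ _)
      _ ≤ |L i - ℓ| + δ i := by
          gcongr
          exact sub_le_iff_le_add.2 (max_le (by simp) (by linarith [le_abs_self (L i - ℓ)]))
  have hk : Tendsto (fun j => ((φ (ψ j) : ℕ) : ℝ≥0∞) + 1) atTop (𝓝 ∞) :=
    tendsto_nhds_top_mono (ENNReal.tendsto_nat_nhds_top.comp (hφ.comp hψ).tendsto_atTop)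
      (.of_forall fun j => le_self_add)
  exact ⟨⟨ℓ, hℓ.1, Γ, hΓlip.lipschitzOnWith⟩, hK.mem_of_tendsto (hΓ 0)
    (.of_forall fun j => (hγ _).zero_mem), hend, setLIntegral_le_of_tendsto_of_lowerSemicontinuous
      hf (fun j => (hγ _).measurable) hΓ hLψ hk fun j => hfa _⟩

/-! ### Potentials of coarse paths -/

theorem abs_deriv_le_of_sub_le {f : ℝ → ℝ} {D C t : ℝ} (hf : HasDerivAt f D t)
    (h : ∀ᶠ s in 𝓝 t, f t - f s ≤ C * |s - t|) : |D| ≤ C := by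
  rw [hasDerivAt_iff_tendsto_slope] at hf
  refine abs_le.2 ⟨?_, ?_⟩
  · have hright : Tendsto (slope f t) (𝓝[>] t) (𝓝 D) :=
      hf.mono_left (nhdsWithin_mono t fun s hs => ne_of_gt hs)
    refine ge_of_tendsto hright ?_
    filter_upwards [nhdsWithin_le_nhds h, self_mem_nhdsWithin] with s hs hts
    have hpos : 0 < s - t := sub_pos.2 hts
    rw [abs_of_pos hpos] at hs
    rw [slope_def_field, le_div_iff₀ hpos]
    linarith
  · have hleft : Tendsto (slope f t) (𝓝[<] t) (𝓝 D) :=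
      hf.mono_left (nhdsWithin_mono t fun s hs => ne_of_lt hs)
    refine le_of_tendsto hleft ?_
    filter_upwards [nhdsWithin_le_nhds h, self_mem_nhdsWithin] with s hs hst
    have hpos : 0 < t - s := sub_pos.2 hst
    rw [abs_sub_comm, abs_of_pos hpos] at hs
    rw [slope_comm, slope_def_field, div_le_iff₀ hpos]
    linarith

section CoarsePotential

variable {Y : Type*} [MetricSpace Y] [MeasurableSpace Y] {S S' K K' : Set Y} {c c' : Y → ℝ≥0∞}
  {δ δ' : ℝ} {x y : Y} {N : ℝ≥0}

variable (S K c δ x) in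
/-- The cutoff function of `K` that decays away from `K` at rate `c` along coarse paths in `S`. -/
def coarsePotential : ℝ≥0∞ :=
  1 - coarseDist S K c δ x

theorem coarsePotential_le_one : coarsePotential S K c δ x ≤ 1 :=
  tsub_le_self

theorem coarsePotential_ne_top : coarsePotential S K c δ x ≠ ∞ :=
  ne_top_of_le_ne_top ENNReal.one_ne_top coarsePotential_le_one

theorem coarsePotential_mono (hS : S ⊆ S') (hK : K ⊆ K') (hc : ∀ y, c' y ≤ c y) (hδ : δ ≤ δ')
    (x : Y) : coarsePotential S K c δ x ≤ coarsePotential S' K' c' δ' x :=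
  tsub_le_tsub_left (coarseDist_anti hS hK hc hδ x) 1

theorem coarsePotential_eq_one (hδ : 0 ≤ δ) (hxK : x ∈ K) (hxS : x ∈ S) :
    coarsePotential S K c δ x = 1 := by
  rw [coarsePotential, coarseDist_eq_zero hδ hxK hxS, tsub_zero]

theorem coarsePotential_eq_zero (hx : x ∉ S) : coarsePotential S K c δ x = 0 := by
  rw [coarsePotential, coarseDist_eq_top hx, tsub_eq_zero_of_le le_top]

theorem toReal_coarsePotential_sub_le (hc : c x ≠ ∞) (hy : y ∈ S) (hxy : dist x y ≤ δ) :
    (coarsePotential S K c δ x).toReal - (coarsePotential S K c δ y).toReal ≤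
      (c x).toReal * dist x y := by
  have hle : coarsePotential S K c δ x ≤
      coarsePotential S K c δ y + c x * ENNReal.ofReal (dist x y) := by
    refine tsub_le_iff_right.2 ((le_tsub_add (a := coarseDist S K c δ y)).trans ?_)
    rw [add_assoc, add_comm (c x * _)]
    exact add_le_add_right (coarseDist_le_add hy hxy) _
  have hmul : c x * ENNReal.ofReal (dist x y) ≠ ∞ := by finiteness
  have hreal := ENNReal.toReal_mono (ENNReal.add_ne_top.2 ⟨coarsePotential_ne_top, hmul⟩) hle
  rw [ENNReal.toReal_add coarsePotential_ne_top hmul, ENNReal.toReal_mul,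
    ENNReal.toReal_ofReal dist_nonneg] at hreal
  linarith

theorem locLipOn_toReal_coarsePotential (hc : ∀ y, c y ≤ N) (hδ : 0 < δ) :
    LocLipOn (fun y => (coarsePotential S K c δ y).toReal) S := by
  refine fun x _ => ⟨δ / 2, half_pos hδ, N, LipschitzOnWith.of_le_add_mul N fun y hy z hz => ?_⟩
  have hyz : dist y z ≤ δ := by
    linarith [dist_triangle_right y z x, mem_ball.1 hy.2, mem_ball.1 hz.2]
  have hN : (c y).toReal ≤ N := ENNReal.toReal_mono ENNReal.coe_ne_top (hc y)
  have hmul := mul_le_mul_of_nonneg_right hN (dist_nonneg (x := y) (y := z))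
  linarith [toReal_coarsePotential_sub_le (K := K)
    (ne_top_of_le_ne_top ENNReal.coe_ne_top (hc y)) hz.1 hyz]

theorem measurable_coarsePotential [BorelSpace Y] (hc : ∀ y, c y ≤ N) (hδ : 0 < δ)
    (hS : MeasurableSet S) : Measurable (coarsePotential S K c δ) := by
  classical
  have hpiecewise : (fun x => (coarsePotential S K c δ x).toReal) =
      S.piecewise (fun x => (coarsePotential S K c δ x).toReal) fun _ => 0 := by
    ext x
    by_cases hx : x ∈ S <;> simp [hx, coarsePotential_eq_zero]
  have hreal : Measurable fun x => (coarsePotential S K c δ x).toReal := by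
    rw [hpiecewise]
    exact (locLipOn_toReal_coarsePotential hc hδ).continuousOn.measurable_piecewise
      continuousOn_const hS
  simpa only [ENNReal.ofReal_toReal coarsePotential_ne_top] using hreal.ennreal_ofReal

theorem isDerivUpperGradientOn_toReal_coarsePotential {μ : Measure Y} (hc : ∀ y, c y ≠ ∞)
    (hδ : 0 < δ) : IsDerivUpperGradientOn μ (fun y => (coarsePotential S K c δ y).toReal) c
      (interior S) := by
  refine .of_forall fun γ => .of_forall fun t ht D hD => ?_
  obtain ⟨p, q, hnhds, hsub, hmaps⟩ := γ.exists_Icc_mapsTo isOpen_interior ht.1 ht.2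
  rw [← ENNReal.ofReal_toReal (hc (γ.toFun t))]
  refine ENNReal.ofReal_le_ofReal (abs_deriv_le_of_sub_le hD ?_)
  filter_upwards [hnhds, ball_mem_nhds t hδ] with s hs hsδ
  have hdist : dist (γ.toFun t) (γ.toFun s) ≤ |s - t| := by
    simpa [Real.dist_eq, abs_sub_comm] using
      γ.lip.dist_le_mul t (Ioo_subset_Icc_self ht.1) s (hsub hs)
  refine (toReal_coarsePotential_sub_le (hc _) (interior_subset (hmaps hs))
    (hdist.trans (mem_ball.1 hsδ).le)).trans ?_
  gcongr

end CoarsePotential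

theorem iInf_coarsePotential_le {S K : Set X} (hS : IsCompact S) (hK : IsClosed K)
    {g : X → ℝ≥0∞} (hg : LowerSemicontinuous g) (hg0 : ∀ y, 0 < g y) {u : X → ℝ}
    (hu : ∀ γ, UGIneq u g γ) (huK : ∀ y ∈ K, 1 ≤ u y) (x : X) :
    ⨅ j : ℕ, coarsePotential S K (fun y => min (g y) (j + 1)) (1 / (j + 1)) x ≤
      ENNReal.ofReal |u x| := by
  refine le_of_forall_lt_imp_le_of_dense fun b hb => ?_
  have hb1 : b < 1 := hb.trans_le ((iInf_le _ 0).trans coarsePotential_le_one)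
  have hpath : ∀ j : ℕ, ∃ L γ, IsCoarsePath S K (1 / (j + 1)) x L γ ∧
      ∫⁻ t in Ico 0 L, min (g (γ t)) (j + 1) < 1 - b := fun j => by
    simpa only [coarseDist, iInf_lt_iff, exists_prop] using
      lt_tsub_comm.1 (hb.trans_le (iInf_le _ j))
  choose L γ hγ hint using hpath
  obtain ⟨Γ, hΓK, hΓx, hΓ⟩ := exists_curve_of_isCoarsePath hS hK hg hg0 (by finiteness)
    tendsto_one_div_add_atTop_nhds_zero_nat hγ fun j => (hint j).le
  have hu0 : (1 : ℝ≥0∞) ≤ ENNReal.ofReal |u x| + ENNReal.ofReal |u (Γ.toFun 0) - u x| := by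
    rw [← ENNReal.ofReal_add (abs_nonneg _) (abs_nonneg _), ENNReal.one_le_ofReal]
    linarith [huK _ hΓK, le_abs_self (u x), le_abs_self (u (Γ.toFun 0) - u x)]
  have hvar : ENNReal.ofReal |u (Γ.toFun 0) - u x| ≤ 1 - b := hΓx ▸ (hu Γ).trans hΓ
  refine (ENNReal.le_sub_of_add_le_right (by finiteness) ?_).trans
    (tsub_le_iff_right.2 (hu0.trans (add_le_add_right hvar _)))
  rw [add_tsub_cancel_of_le hb1.le]

/-! ### Capacity cutoffs -/

theorem IsWeakUpperGradientOn.exists_lowerSemicontinuous [SecondCountableTopology X]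
    {μ : Measure X} [IsLocallyFiniteMeasure μ] {u : X → ℝ} {g : X → ℝ≥0∞}
    (h : IsWeakUpperGradientOn μ u g univ) {ε : ℝ≥0∞} (hε : ε ≠ 0) :
    ∃ ĝ : X → ℝ≥0∞, LowerSemicontinuous ĝ ∧ (∀ x, 0 < ĝ x) ∧
      ∫⁻ x, ĝ x ∂μ ≤ ∫⁻ x, g x ∂μ + ε ∧ ∀ γ, UGIneq u ĝ γ := by
  set g' := h.1.mk g
  have hae : ∀ᶠ γ in aeCurve μ, UGIneq u g' γ := by
    filter_upwards [eventually_aeCurve_ae h.1.ae_eq_mk,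
      eventually_aeCurve_iff.2 (h.2.mono fun γ hγ => ⟨fun _ _ => mem_univ _, hγ⟩)] with γ hγ hUG
    exact hUG.trans_eq (setLIntegral_congr_fun_ae measurableSet_Icc hγ)
  have hε3 : ε / 3 ≠ 0 := ENNReal.div_ne_zero.2 ⟨hε, by norm_num⟩
  obtain ⟨ρ, hρ, hρε, hρtop⟩ := (eventually_aeCurve_iff.1 hae).exists_lintegral_le hε3
  obtain ⟨θ, hθ0, hθ, hθε⟩ := exists_pos_lintegral_lt_of_sigmaFinite μ hε3
  have hmeas : Measurable fun x => g' x + ρ x + θ x :=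
    (h.1.measurable_mk.add hρ).add hθ.coe_nnreal_ennreal
  obtain ⟨ĝ, hle, hlsc, hint⟩ := exists_le_lowerSemicontinuous_lintegral_ge μ _ hmeas hε3
  refine ⟨ĝ, hlsc, fun x => ?_, hint.trans ?_, fun γ => ?_⟩
  · exact (ENNReal.coe_pos.2 (hθ0 x)).trans_le (le_add_self.trans (hle x))
  · rw [lintegral_add_right _ hθ.coe_nnreal_ennreal, lintegral_add_right _ hρ,
      ← lintegral_congr_ae h.1.ae_eq_mk, add_assoc, add_assoc]
    calc ∫⁻ x, g x ∂μ + (∫⁻ x, ρ x ∂μ + (∫⁻ x, (θ x : ℝ≥0∞) ∂μ + ε / 3))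
        ≤ ∫⁻ x, g x ∂μ + (ε / 3 + (ε / 3 + ε / 3)) := by gcongr
      _ = ∫⁻ x, g x ∂μ + ε := by rw [← add_assoc (ε / 3), ENNReal.add_thirds]
  · by_cases hγ : UGIneq u g' γ
    · exact hγ.trans (lintegral_mono fun t => (le_self_add.trans le_self_add).trans (hle _))
    · refine le_top.trans ((hρtop γ hγ).ge.trans (lintegral_mono fun t => ?_))
      exact (le_add_self.trans le_self_add).trans (hle _)

theorem exists_upperGradient_of_capa1_lt [SecondCountableTopology X] {μ : Measure X}
    [IsLocallyFiniteMeasure μ] {G : Set X} {ε : ℝ≥0∞} (h : capa1 μ G < ε) :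
    ∃ (u : X → ℝ) (g : X → ℝ≥0∞), (∀ x ∈ G, 1 ≤ u x) ∧ ∫⁻ x, ENNReal.ofReal |u x| ∂μ ≤ ε ∧
      LowerSemicontinuous g ∧ (∀ x, 0 < g x) ∧ ∫⁻ x, g x ∂μ ≤ ε ∧ ∀ γ, UGIneq u g γ := by
  simp only [capa1, iInf_lt_iff] at h
  obtain ⟨u, -, huG, hnorm⟩ := h
  simp only [NNorm, Measure.restrict_univ] at hnorm
  have hgrad := lt_of_le_of_lt le_add_self hnorm
  simp only [iInf_lt_iff] at hgrad
  obtain ⟨g, hg, hgε⟩ := hgrad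
  obtain ⟨ĝ, hlsc, hpos, hint, hUG⟩ := hg.exists_lowerSemicontinuous (tsub_pos_of_lt hgε).ne'
  rw [add_tsub_cancel_of_le hgε.le] at hint
  exact ⟨u, ĝ, huG, le_self_add.trans hnorm.le, hlsc, hpos, hint, hUG⟩

/-- An exhaustion of `G` by compact sets, each in the interior of the next. Unlike Mathlib's
`CompactExhaustion`, it exhausts a subset of the ambient space. -/
structure IsCompactExhaustion {Y : Type*} [TopologicalSpace Y] (K : ℕ → Set Y) (G : Set Y) :
    Prop where
  isCompact : ∀ n, IsCompact (K n)
  subset_interior_succ : ∀ n, K n ⊆ interior (K (n + 1))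
  iUnion_eq : ⋃ n, K n = G

namespace IsCompactExhaustion

variable {Y : Type*} [TopologicalSpace Y] {K : ℕ → Set Y} {G : Set Y}

theorem monotone (h : IsCompactExhaustion K G) : Monotone K :=
  monotone_nat_of_le_succ fun n => (h.subset_interior_succ n).trans interior_subset

theorem subset (h : IsCompactExhaustion K G) (n : ℕ) : K n ⊆ G :=
  h.iUnion_eq ▸ subset_iUnion K n

theorem exists_superset (h : IsCompactExhaustion K G) {C : Set Y} (hC : IsCompact C)
    (hCG : C ⊆ G) : ∃ n, C ⊆ K n := by
  have hcover : C ⊆ ⋃ n, interior (K (n + 1)) :=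
    (hCG.trans h.iUnion_eq.ge).trans (iUnion_mono h.subset_interior_succ)
  have hmono : Monotone fun n => interior (K (n + 1)) :=
    fun m n hmn => interior_mono (h.monotone (by lia))
  obtain ⟨n, hn⟩ := hC.elim_directed_cover _ (fun n => isOpen_interior) hcover hmono.directed_le
  exact ⟨n + 1, hn.trans interior_subset⟩

end IsCompactExhaustion

theorem exists_isCompactExhaustion {Y : Type*} [MetricSpace Y] [ProperSpace Y] {G : Set Y}
    (hG : IsOpen G) : ∃ K, K 1 = ∅ ∧ IsCompactExhaustion K G := by
  have : LocallyCompactSpace G := hG.locallyCompactSpace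
  let Q := (CompactExhaustion.choice G).shiftr.shiftr
  refine ⟨fun n => Subtype.val '' Q n, image_empty _,
    fun n => (Q.isCompact n).image continuous_subtype_val, fun n => ?_, ?_⟩
  · refine (image_mono (Q.subset_interior_succ n)).trans ?_
    exact hG.isOpenMap_subtype_val.image_interior_subset _
  · rw [← image_iUnion, Q.iUnion_eq, image_univ, Subtype.range_val]

theorem toReal_mem_Icc_of_le_one {a : ℝ≥0∞} (ha : a ≤ 1) : a.toReal ∈ Icc (0 : ℝ) 1 :=
  ⟨ENNReal.toReal_nonneg, ENNReal.toReal_mono ENNReal.one_ne_top ha⟩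

theorem tendsto_lintegral_ofReal_abs_toReal_sub {α : Type*} [MeasurableSpace α] {ν : Measure α}
    [IsFiniteMeasure ν] {f : ℕ → α → ℝ≥0∞} {F : α → ℝ≥0∞} (hf : ∀ n, Measurable (f n))
    (hf1 : ∀ n x, f n x ≤ 1) (hlim : ∀ x, Tendsto (fun n => f n x) atTop (𝓝 (F x))) :
    Tendsto (fun n => ∫⁻ x, ENNReal.ofReal |(f n x).toReal - (F x).toReal| ∂ν) atTop (𝓝 0) := by
  have hF : Measurable F := measurable_of_tendsto_metrizable hf (tendsto_pi_nhds.2 hlim)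
  have hF1 : ∀ x, F x ≤ 1 := fun x => le_of_tendsto' (hlim x) fun n => hf1 n x
  rw [← lintegral_zero (μ := ν)]
  refine tendsto_lintegral_of_dominated_convergence (fun _ => 1)
    (fun n => ((hf n).ennreal_toReal.sub hF.ennreal_toReal).abs.ennreal_ofReal)
    (fun n => .of_forall fun x => ?_) (by simp) (.of_forall fun x => ?_)
  · exact ofReal_abs_sub_le_one (toReal_mem_Icc_of_le_one (hf1 n x))
      (toReal_mem_Icc_of_le_one (hF1 x))
  · have hreal := (ENNReal.tendsto_toReal (ne_top_of_le_ne_top ENNReal.one_ne_top (hF1 x))).comp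
      (hlim x)
    simpa using ENNReal.tendsto_ofReal (hreal.sub_const (F x).toReal).abs

theorem exists_lintegral_ofReal_abs_toReal_sub_iSup_iInf_lt {α : Type*} [MeasurableSpace α]
    {ν : Measure α} [IsFiniteMeasure ν] {e : ℕ → ℕ → α → ℝ≥0∞} (he : ∀ n j, Measurable (e n j))
    (he1 : ∀ n j x, e n j x ≤ 1) (hanti : ∀ n x, Antitone fun j => e n j x)
    (hmono : ∀ j x, Monotone fun n => e n j x) {τ : ℝ≥0∞} (hτ : 0 < τ) (N : ℕ) :
    ∃ n ≥ N, ∃ j,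
      ∫⁻ x, ENNReal.ofReal |(e n j x).toReal - (⨆ n, ⨅ j, e n j x).toReal| ∂ν < τ := by
  have hτ2 : 0 < τ / 2 := ENNReal.half_pos hτ.ne'
  have hf : ∀ n, Measurable fun x => ⨅ j, e n j x := fun n => .iInf (he n)
  have hlim := tendsto_lintegral_ofReal_abs_toReal_sub (ν := ν) hf
    (fun n x => (iInf_le _ 0).trans (he1 n 0 x))
    fun x => tendsto_atTop_iSup fun m n hmn => iInf_mono fun j => hmono j x hmn
  obtain ⟨n, hn, hNn⟩ := ((hlim.eventually_lt_const hτ2).and (eventually_ge_atTop N)).exists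
  have hlim' := tendsto_lintegral_ofReal_abs_toReal_sub (ν := ν) (he n) (he1 n)
    fun x => tendsto_atTop_iInf (hanti n x)
  obtain ⟨j, hj⟩ := (hlim'.eventually_lt_const hτ2).exists
  refine ⟨n, hNn, j, ?_⟩
  calc _ ≤ ∫⁻ x, (ENNReal.ofReal |(e n j x).toReal - (⨅ j, e n j x).toReal| +
          ENNReal.ofReal |(⨅ j, e n j x).toReal - (⨆ n, ⨅ j, e n j x).toReal|) ∂ν := by
        refine lintegral_mono fun x => ?_
        rw [← ENNReal.ofReal_add (abs_nonneg _) (abs_nonneg _)]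
        exact ENNReal.ofReal_le_ofReal (abs_sub_le _ _ _)
    _ ≤ _ := (lintegral_add_left
        ((he n j).ennreal_toReal.sub (hf n).ennreal_toReal).abs.ennreal_ofReal _).le
    _ < τ / 2 + τ / 2 := ENNReal.add_lt_add hj hn
    _ = τ := ENNReal.add_halves τ

/-- A capacity potential `û` of `G` of size `ε`, together with a function `g` of integral at most
`ε` that is an upper gradient of locally Lipschitz cutoff functions `η` approximating `û`. The
approximations equal `1` only on a prescribed compact subset of `G`, which is why `û` itself need
not be locally Lipschitz. -/
structure IsCapacityCutoff (μ : Measure X) (G : Set X) (ε : ℝ≥0∞) (û : X → ℝ) (g : X → ℝ≥0∞) :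
    Prop where
  measurable : Measurable û
  mem_Icc : ∀ x, û x ∈ Icc (0 : ℝ) 1
  eq_one : ∀ x ∈ G, û x = 1
  lintegral_le : ∫⁻ x, ENNReal.ofReal (û x) ∂μ ≤ ε
  measurable_gradient : Measurable g
  lintegral_gradient_le : ∫⁻ x, g x ∂μ ≤ ε
  exists_approx : ∀ C K : Set X, IsCompact C → IsCompact K → K ⊆ G →
    ∀ ν : Measure X, IsFiniteMeasure ν → ∀ τ : ℝ≥0∞, 0 < τ →
      ∃ η : X → ℝ, Measurable η ∧ (∀ x, η x ∈ Icc (0 : ℝ) 1) ∧ LocLipOn η (interior C) ∧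
        IsDerivUpperGradientOn μ η g (interior C) ∧ (∀ x ∈ K, η x = 1) ∧
        ∫⁻ x, ENNReal.ofReal |η x - û x| ∂ν < τ

section ExhaustionPotential

variable {Y : Type*} [MetricSpace Y] [MeasurableSpace Y]

/-- The coarse potentials of the sets `K n`, with paths in `Q n ∪ K n`, weight `g` truncated at
height `j + 1` and step `1 / (j + 1)`; letting first `j` and then `n` tend to infinity produces a
potential of `⋃ n, K n`. -/
def exhaustionPotential (Q K : ℕ → Set Y) (g : Y → ℝ≥0∞) (n j : ℕ) (x : Y) : ℝ≥0∞ :=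
  coarsePotential (Q n ∪ K n) (K n) (fun y => min (g y) (j + 1)) (1 / (j + 1)) x

variable {Q K : ℕ → Set Y} {g : Y → ℝ≥0∞} {n j : ℕ} {x : Y}

theorem min_add_one_le_coe (a : ℝ≥0∞) (j : ℕ) : min a (j + 1) ≤ ((j + 1 : ℝ≥0) : ℝ≥0∞) := by
  exact_mod_cast min_le_right a (j + 1)

theorem exhaustionPotential_le_one : exhaustionPotential Q K g n j x ≤ 1 :=
  coarsePotential_le_one

theorem exhaustionPotential_eq_one (hx : x ∈ K n) : exhaustionPotential Q K g n j x = 1 :=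
  coarsePotential_eq_one Nat.one_div_pos_of_nat.le hx (.inr hx)

theorem antitone_exhaustionPotential : Antitone fun j => exhaustionPotential Q K g n j x :=
  fun _ _ hij => coarsePotential_mono subset_rfl subset_rfl (fun y => by gcongr)
    (Nat.one_div_le_one_div hij) x

theorem monotone_exhaustionPotential (hQ : Monotone Q) (hK : Monotone K) :
    Monotone fun n => exhaustionPotential Q K g n j x :=
  fun _ _ hmn => coarsePotential_mono (union_subset_union (hQ hmn) (hK hmn)) (hK hmn)
    (fun _ => le_rfl) le_rfl x

theorem measurable_exhaustionPotential [BorelSpace Y] (hS : MeasurableSet (Q n ∪ K n)) :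
    Measurable (exhaustionPotential Q K g n j) :=
  measurable_coarsePotential (fun _ => min_add_one_le_coe _ j) Nat.one_div_pos_of_nat hS

theorem locLipOn_toReal_exhaustionPotential :
    LocLipOn (fun x => (exhaustionPotential Q K g n j x).toReal) (Q n ∪ K n) :=
  locLipOn_toReal_coarsePotential (fun _ => min_add_one_le_coe _ j) Nat.one_div_pos_of_nat

theorem isDerivUpperGradientOn_toReal_exhaustionPotential {μ : Measure Y} :
    IsDerivUpperGradientOn μ (fun x => (exhaustionPotential Q K g n j x).toReal) g
      (interior (Q n ∪ K n)) :=
  (isDerivUpperGradientOn_toReal_coarsePotential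
    (fun _ => ne_top_of_le_ne_top ENNReal.coe_ne_top (min_add_one_le_coe _ j))
    Nat.one_div_pos_of_nat).mono fun _ _ => min_le_left _ _

end ExhaustionPotential

theorem exists_isCapacityCutoff [ProperSpace X] {μ : Measure X} [IsLocallyFiniteMeasure μ]
    {G : Set X} (hG : IsOpen G) {ε : ℝ≥0∞} (h : capa1 μ G < ε) :
    ∃ û g, IsCapacityCutoff μ G ε û g := by
  obtain ⟨u, g, huG, huε, hlsc, hpos, hgε, hUG⟩ := exists_upperGradient_of_capa1_lt h
  obtain ⟨K, -, hK⟩ := exists_isCompactExhaustion hG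
  obtain ⟨Q, -, hQ⟩ := exists_isCompactExhaustion (isOpen_univ (X := X))
  set e := exhaustionPotential Q K g
  have hS : ∀ n, IsCompact (Q n ∪ K n) := fun n => (hQ.isCompact n).union (hK.isCompact n)
  have he : ∀ n j, Measurable (e n j) :=
    fun n j => measurable_exhaustionPotential (hS n).measurableSet
  have hle : ∀ x, ⨆ n, ⨅ j, e n j x ≤ 1 := fun x =>
    iSup_le fun n => (iInf_le _ 0).trans exhaustionPotential_le_one
  refine ⟨fun x => (⨆ n, ⨅ j, e n j x).toReal, g,
    (Measurable.iSup fun n => .iInf (he n)).ennreal_toReal,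
    fun x => toReal_mem_Icc_of_le_one (hle x), fun x hx => ?_, ?_, hlsc.measurable, hgε,
    fun C K' hC hK' hK'G ν _ τ hτ => ?_⟩
  · obtain ⟨n, hn⟩ := mem_iUnion.1 (hK.iUnion_eq.ge hx)
    rw [(hle x).antisymm (le_iSup_of_le n (le_iInf fun j => (exhaustionPotential_eq_one hn).ge)),
      ENNReal.toReal_one]
  · refine (lintegral_mono fun x => ENNReal.ofReal_toReal_le.trans (iSup_le fun n => ?_)).trans huε
    exact iInf_coarsePotential_le (hS n) (hK.isCompact n).isClosed hlsc hpos hUG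
      (fun y hy => huG y (hK.subset n hy)) x
  · obtain ⟨m, hm⟩ := hQ.exists_superset hC (subset_univ C)
    obtain ⟨m', hm'⟩ := hK.exists_superset hK' hK'G
    obtain ⟨n, hn, j, hj⟩ := exists_lintegral_ofReal_abs_toReal_sub_iSup_iInf_lt (ν := ν) he
      (fun _ _ _ => exhaustionPotential_le_one) (fun _ _ => antitone_exhaustionPotential)
      (fun _ _ => monotone_exhaustionPotential hQ.monotone hK.monotone) hτ (max m m')
    have hCS : interior C ⊆ interior (Q n ∪ K n) := interior_mono <|
      (hm.trans (hQ.monotone ((le_max_left _ _).trans hn))).trans subset_union_left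
    have hK'n : K' ⊆ K n := hm'.trans (hK.monotone ((le_max_right _ _).trans hn))
    exact ⟨fun x => (e n j x).toReal, (he n j).ennreal_toReal,
      fun x => toReal_mem_Icc_of_le_one exhaustionPotential_le_one,
      locLipOn_toReal_exhaustionPotential.mono (hCS.trans interior_subset),
      isDerivUpperGradientOn_toReal_exhaustionPotential.mono_set hCS,
      fun x hx => by simp [e, exhaustionPotential_eq_one (hK'n hx)], hj⟩

/-! ### Patching with Lipschitz partitions of unity -/

section LocallyLipschitz

variable {Y : Type*} [MetricSpace Y] {u v : Y → ℝ} {Ω : Set Y}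

theorem locLipOn_of_lipschitzWith {L : ℝ≥0} (hu : LipschitzWith L u) : LocLipOn u Ω :=
  locLipOn_iff_locallyLipschitzOn.2 hu.locallyLipschitz.locallyLipschitzOn

theorem LocLipOn.add (hu : LocLipOn u Ω) (hv : LocLipOn v Ω) :
    LocLipOn (fun x => u x + v x) Ω :=
  locLipOn_iff_locallyLipschitzOn.2 <|
    (locLipOn_iff_locallyLipschitzOn.1 hu).add (locLipOn_iff_locallyLipschitzOn.1 hv)

theorem LocLipOn.sum {ι : Type*} {f : ι → Y → ℝ} {S : Finset ι}
    (hf : ∀ i ∈ S, LocLipOn (f i) Ω) : LocLipOn (fun x => ∑ i ∈ S, f i x) Ω := by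
  classical
  induction S using Finset.induction_on with
  | empty => exact locLipOn_of_lipschitzWith (LipschitzWith.const 0)
  | insert i S hi ih =>
    simp only [Finset.sum_insert hi]
    exact (hf i (Finset.mem_insert_self i S)).add
      (ih fun j hj => hf j (Finset.mem_insert_of_mem hj))

theorem LocLipOn.mul (hu : LocLipOn u Ω) (hv : LocLipOn v Ω) (hu1 : ∀ x ∈ Ω, |u x| ≤ 1)
    (hv1 : ∀ x ∈ Ω, |v x| ≤ 1) : LocLipOn (fun x => u x * v x) Ω := by
  intro z hz
  obtain ⟨r, hr, K, hK⟩ := hu z hz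
  obtain ⟨r', hr', K', hK'⟩ := hv z hz
  refine ⟨min r r', lt_min hr hr', K + K', .of_dist_le_mul fun x hx y hy => ?_⟩
  have hball : ball z (min r r') ⊆ ball z r ∩ ball z r' :=
    subset_inter (ball_subset_ball (min_le_left r r')) (ball_subset_ball (min_le_right r r'))
  calc |u x * v x - u y * v y| = |(u x - u y) * v x + u y * (v x - v y)| := by congr 1; ring
    _ ≤ |u x - u y| * |v x| + |u y| * |v x - v y| := by
        simpa only [abs_mul] using abs_add_le ((u x - u y) * v x) (u y * (v x - v y))
    _ ≤ |u x - u y| * 1 + 1 * |v x - v y| := by gcongr <;> simp_all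
    _ ≤ K * dist x y + K' * dist x y := by
        rw [mul_one, one_mul]
        exact add_le_add
          (hK.dist_le_mul x ⟨hx.1, (hball hx.2).1⟩ y ⟨hy.1, (hball hy.2).1⟩)
          (hK'.dist_le_mul x ⟨hx.1, (hball hx.2).2⟩ y ⟨hy.1, (hball hy.2).2⟩)
    _ = ↑(K + K') * dist x y := by push_cast; ring

theorem LocLipOn.of_forall_eventuallyEq
    (h : ∀ z ∈ Ω, ∃ O ∈ 𝓝 z, ∃ v, LocLipOn v O ∧ u =ᶠ[𝓝 z] v) : LocLipOn u Ω := by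
  intro z hz
  obtain ⟨O, hO, v, hv, huv⟩ := h z hz
  obtain ⟨r, hr, K, hK⟩ := hv z (mem_of_mem_nhds hO)
  have hnhds : O ∩ ball z r ∩ {x | u x = v x} ∈ 𝓝 z :=
    inter_mem (inter_mem hO (ball_mem_nhds z hr)) huv
  obtain ⟨r', hr', hsub⟩ := Metric.mem_nhds_iff.1 hnhds
  refine ⟨r', hr', K, fun x hx y hy => ?_⟩
  rw [show u x = v x from (hsub hx.2).2, show u y = v y from (hsub hy.2).2]
  exact hK (hsub hx.2).1 (hsub hy.2).1

theorem Curve.abs_deriv_comp_le_of_lipschitzWith {γ : Curve Y} {L : ℝ≥0} (hu : LipschitzWith L u)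
    {t D : ℝ} (ht : t ∈ Ioo 0 γ.len) (hD : HasDerivAt (u ∘ γ.toFun) D t) : |D| ≤ L := by
  simpa using hD.le_of_lipschitzOn (Icc_mem_nhds ht.1 ht.2) (hu.comp_lipschitzOnWith γ.lip)

end LocallyLipschitz

/-- A locally finite partition of unity on `W` by Lipschitz functions `φ m`, with Lipschitz
constants `L m` and with `φ m` supported in the compact subset `Q m` of `W`. -/
structure IsLipschitzPartition {Y : Type*} [MetricSpace Y] (φ : ℕ → Y → ℝ) (L : ℕ → ℝ≥0)
    (Q : ℕ → Set Y) (W : Set Y) : Prop where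
  nonneg : ∀ m x, 0 ≤ φ m x
  lipschitzWith : ∀ m, LipschitzWith (L m) (φ m)
  isCompact : ∀ m, IsCompact (Q m)
  subset : ∀ m, Q m ⊆ W
  eq_zero : ∀ m, ∀ x ∉ Q m, φ m x = 0
  exists_finset : ∀ z ∈ W, ∃ S : Finset ℕ, (∀ m ∈ S, z ∈ Q m) ∧
    ∀ᶠ x in 𝓝 z, (∀ m ∉ S, φ m x = 0) ∧ ∑ m ∈ S, φ m x = 1

theorem exists_lipschitz_bump {Y : Type*} [MetricSpace Y] {K O : Set Y} (hK : IsCompact K)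
    (hO : IsOpen O) (hKO : K ⊆ O) :
    ∃ (ψ : Y → ℝ) (L : ℝ≥0), LipschitzWith L ψ ∧ (∀ x, ψ x ∈ Icc (0 : ℝ) 1) ∧
      (∀ x ∈ K, ψ x = 1) ∧ ∀ x ∉ O, ψ x = 0 := by
  obtain ⟨δ, hδ, hsub⟩ := hK.exists_thickening_subset_open hO hKO
  refine ⟨fun x => thickenedIndicator hδ K x, δ.toNNReal⁻¹,
    lipschitzWith_thickenedIndicator hδ K, fun x => ?_, fun x hx => ?_, fun x hx => ?_⟩
  · exact ⟨NNReal.coe_nonneg _, NNReal.coe_le_one.2 (thickenedIndicator_le_one hδ K x)⟩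
  · exact NNReal.coe_eq_one.2 (thickenedIndicator_one hδ K hx)
  · exact NNReal.coe_eq_zero.2 (thickenedIndicator_zero hδ K fun h => hx (hsub h))

theorem IsCompactExhaustion.exists_lipschitz_bumps {Y : Type*} [MetricSpace Y] {K : ℕ → Set Y}
    {W : Set Y} (hK : IsCompactExhaustion K W) :
    ∃ (ψ : ℕ → Y → ℝ) (L : ℕ → ℝ≥0), (∀ m, LipschitzWith (L m) (ψ m)) ∧
      (∀ x, Monotone fun m => ψ m x) ∧ (∀ m, ∀ x ∈ K m, ψ m x = 1) ∧
      ∀ m, ∀ x ∉ K (m + 1), ψ m x = 0 := by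
  choose ψ L hψL hψ hψ1 hψ0 using fun m => exists_lipschitz_bump (hK.isCompact m)
    isOpen_interior (hK.subset_interior_succ m)
  refine ⟨ψ, L, hψL, fun x => monotone_nat_of_le_succ fun m => ?_, hψ1,
    fun m x hx => hψ0 m x fun h => hx (interior_subset h)⟩
  by_cases hx : x ∈ K (m + 1)
  · exact (hψ m x).2.trans (hψ1 (m + 1) x hx).ge
  · exact (hψ0 m x fun h => hx (interior_subset h)).trans_le (hψ (m + 1) x).1

theorem exists_isLipschitzPartition {Y : Type*} [MetricSpace Y] [ProperSpace Y] {W : Set Y}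
    (hW : IsOpen W) : ∃ φ L Q, IsLipschitzPartition φ L Q W := by
  obtain ⟨K, hK1, hK⟩ := exists_isCompactExhaustion hW
  obtain ⟨ψ, L, hL, hmono, hψ1, hψ0⟩ := hK.exists_lipschitz_bumps
  have hzero : ∀ m, ∀ x ∉ K (m + 2), ψ (m + 1) x - ψ m x = 0 := fun m x hx => by
    rw [hψ0 (m + 1) x hx, hψ0 m x fun h => hx (hK.monotone (Nat.le_succ _) h), sub_zero]
  refine ⟨fun m x => ψ (m + 1) x - ψ m x, fun m => L (m + 1) + L m, fun m => K (m + 2),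
    fun m x => sub_nonneg.2 (hmono x m.le_succ), fun m => (hL (m + 1)).sub (hL m),
    fun m => hK.isCompact _, fun m => hK.subset _, hzero, fun z hz => ?_⟩
  classical
  obtain ⟨N, hN⟩ := mem_iUnion.1 (hK.iUnion_eq.ge hz)
  have hnear : ∀ᶠ x in 𝓝 z, x ∈ K (N + 1) :=
    mem_interior_iff_mem_nhds.1 (hK.subset_interior_succ N hN)
  have hfar : ∀ᶠ x in 𝓝 z, ∀ m ∈ Finset.range (N + 1), z ∉ K (m + 2) → x ∉ K (m + 2) :=
    (Filter.eventually_all_finset _).2 fun m _ =>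
      eventually_imp_distrib_left.2 (hK.isCompact _).isClosed.isOpen_compl.mem_nhds
  refine ⟨{m ∈ Finset.range (N + 1) | z ∈ K (m + 2)}, fun m hm => (Finset.mem_filter.1 hm).2, ?_⟩
  filter_upwards [hnear, hfar] with x hx hxfar
  have hone : ∀ m, N + 1 ≤ m → ψ m x = 1 := fun m hm => hψ1 m x (hK.monotone hm hx)
  have hvanish : ∀ m ∈ Finset.range (N + 1), z ∉ K (m + 2) → ψ (m + 1) x - ψ m x = 0 :=
    fun m hm hzm => hzero m x (hxfar m hm hzm)
  constructor
  · intro m hm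
    by_cases hmN : m ∈ Finset.range (N + 1)
    · exact hvanish m hmN fun h => hm (Finset.mem_filter.2 ⟨hmN, h⟩)
    · have hle : N + 1 ≤ m := not_lt.1 fun h => hmN (Finset.mem_range.2 h)
      rw [hone m hle, hone (m + 1) (hle.trans m.le_succ), sub_self]
  · rw [Finset.sum_filter_of_ne fun m hm hne => not_imp_comm.1 (hvanish m hm) hne,
      Finset.sum_range_sub (fun m => ψ m x), hone _ le_rfl,
      hψ0 0 x (hK1 ▸ notMem_empty x), sub_zero]

/-- The function `∑ m, φ m * η m`, which glues the local functions `η m` along a partition of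
unity `φ`. The sum is locally finite where it is used. -/
def patch {Y : Type*} (φ η : ℕ → Y → ℝ) (x : Y) : ℝ :=
  ∑' m, φ m x * η m x

theorem patch_eq_sum {Y : Type*} {φ η : ℕ → Y → ℝ} {x : Y} {S : Finset ℕ}
    (hS : ∀ m ∉ S, φ m x = 0) : patch φ η x = ∑ m ∈ S, φ m x * η m x :=
  tsum_eq_sum fun m hm => by rw [hS m hm, zero_mul]

namespace IsLipschitzPartition

variable {Y : Type*} [MetricSpace Y] {φ : ℕ → Y → ℝ} {L : ℕ → ℝ≥0} {Q : ℕ → Set Y} {W : Set Y}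
  {η : ℕ → Y → ℝ}

theorem patch_mem_Icc (hφ : IsLipschitzPartition φ L Q W) (hη : ∀ m x, η m x ∈ Icc (0 : ℝ) 1)
    (x : Y) : patch φ η x ∈ Icc (0 : ℝ) 1 := by
  by_cases hx : x ∈ W
  · obtain ⟨S, -, hS⟩ := hφ.exists_finset x hx
    obtain ⟨hzero, hsum⟩ := hS.self_of_nhds
    rw [patch_eq_sum hzero]
    refine ⟨Finset.sum_nonneg fun m _ => mul_nonneg (hφ.nonneg m x) (hη m x).1, ?_⟩
    rw [← hsum]
    exact Finset.sum_le_sum fun m _ => mul_le_of_le_one_right (hφ.nonneg m x) (hη m x).2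
  · rw [patch_eq_sum (S := ∅) fun m _ => hφ.eq_zero m x fun h => hx (hφ.subset m h)]
    simp

theorem ofReal_abs_patch_sub_le (hφ : IsLipschitzPartition φ L Q W) {x : Y} (hx : x ∈ W) (a : ℝ) :
    ENNReal.ofReal |patch φ η x - a| ≤ ∑' m, ENNReal.ofReal |η m x - a| := by
  obtain ⟨S, -, hS⟩ := hφ.exists_finset x hx
  obtain ⟨hzero, hsum⟩ := hS.self_of_nhds
  have hφ1 : ∀ m ∈ S, φ m x ≤ 1 := fun m hm =>
    hsum ▸ Finset.single_le_sum (fun i _ => hφ.nonneg i x) hm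
  have hpatch : patch φ η x - a = ∑ m ∈ S, φ m x * (η m x - a) := by
    simp only [patch_eq_sum hzero, mul_sub, Finset.sum_sub_distrib, ← Finset.sum_mul, hsum, one_mul]
  calc ENNReal.ofReal |patch φ η x - a|
      ≤ ENNReal.ofReal (∑ m ∈ S, |η m x - a|) := by
        refine ENNReal.ofReal_le_ofReal ?_
        rw [hpatch]
        refine (Finset.abs_sum_le_sum_abs _ _).trans (Finset.sum_le_sum fun m hm => ?_)
        rw [abs_mul, abs_of_nonneg (hφ.nonneg m x)]
        exact mul_le_of_le_one_left (abs_nonneg _) (hφ1 m hm)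
    _ = ∑ m ∈ S, ENNReal.ofReal |η m x - a| := ENNReal.ofReal_sum_of_nonneg fun _ _ => abs_nonneg _
    _ ≤ ∑' m, ENNReal.ofReal |η m x - a| := ENNReal.sum_le_tsum S

theorem eventually_patch_eq_one (hφ : IsLipschitzPartition φ L Q W) {z : Y} (hz : z ∈ W)
    (hη : ∀ m, z ∈ Q m → ∀ᶠ x in 𝓝 z, η m x = 1) : ∀ᶠ x in 𝓝 z, patch φ η x = 1 := by
  obtain ⟨S, hSQ, hS⟩ := hφ.exists_finset z hz
  have hη1 : ∀ᶠ x in 𝓝 z, ∀ m ∈ S, η m x = 1 :=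
    (Filter.eventually_all_finset S).2 fun m hm => hη m (hSQ m hm)
  filter_upwards [hS, hη1] with x hx hηx
  rw [patch_eq_sum hx.1, ← hx.2]
  exact Finset.sum_congr rfl fun m hm => by rw [hηx m hm, mul_one]

theorem locLipOn_patch (hφ : IsLipschitzPartition φ L Q W) (hη : ∀ m x, η m x ∈ Icc (0 : ℝ) 1)
    {O : ℕ → Set Y} (hO : ∀ m, IsOpen (O m)) (hQO : ∀ m, Q m ⊆ O m)
    (hηL : ∀ m, LocLipOn (η m) (O m)) : LocLipOn (patch φ η) W := by
  refine .of_forall_eventuallyEq fun z hz => ?_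
  obtain ⟨S, hSQ, hS⟩ := hφ.exists_finset z hz
  have hφ1 : ∀ x, (∀ m ∉ S, φ m x = 0) ∧ ∑ m ∈ S, φ m x = 1 → ∀ m ∈ S, |φ m x| ≤ 1 :=
    fun x hx m hm => (abs_of_nonneg (hφ.nonneg m x)).trans_le
      (hx.2 ▸ Finset.single_le_sum (fun i _ => hφ.nonneg i x) hm)
  have hmem : ∀ᶠ x in 𝓝 z, ∀ m ∈ S, x ∈ O m :=
    (Filter.eventually_all_finset S).2 fun m hm => (hO m).mem_nhds (hQO m (hSQ m hm))
  refine ⟨_, hmem.and hS, fun x => ∑ m ∈ S, φ m x * η m x, .sum fun m hm => ?_,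
    hS.mono fun x hx => patch_eq_sum hx.1⟩
  exact (locLipOn_of_lipschitzWith (hφ.lipschitzWith m)).mul
    ((hηL m).mono fun x hx => hx.1 m hm) (fun x hx => hφ1 x hx.2 m hm)
    fun x _ => (abs_of_nonneg (hη m x).1).trans_le (hη m x).2

end IsLipschitzPartition

theorem abs_sum_mul_add_mul_le {ι : Type*} {S : Finset ι} {p e f q : ι → ℝ} (a : ℝ)
    (hp : ∑ i ∈ S, p i = 0) (hf : ∀ i ∈ S, 0 ≤ f i) :
    |∑ i ∈ S, (p i * e i + f i * q i)| ≤
      ∑ i ∈ S, f i * |q i| + ∑ i ∈ S, |p i| * |e i - a| := by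
  have hshift : ∑ i ∈ S, (p i * e i + f i * q i) =
      ∑ i ∈ S, f i * q i + ∑ i ∈ S, p i * (e i - a) := by
    simp only [mul_sub, Finset.sum_sub_distrib, ← Finset.sum_mul, hp, zero_mul, sub_zero,
      Finset.sum_add_distrib, add_comm]
  rw [hshift]
  refine (abs_add_le _ _).trans (add_le_add ?_ ?_) <;>
    refine (Finset.abs_sum_le_sum_abs _ _).trans (Finset.sum_le_sum fun i hi => ?_)
  · rw [abs_mul, abs_of_nonneg (hf i hi)]
  · rw [abs_mul]

theorem ofReal_sum_mul_le_of_sum_eq_one {ι : Type*} {S : Finset ι} {f q : ι → ℝ}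
    (hf : ∀ i ∈ S, 0 ≤ f i) (hf1 : ∑ i ∈ S, f i = 1) {b : ℝ≥0∞}
    (hq : ∀ i ∈ S, ENNReal.ofReal |q i| ≤ b) : ENNReal.ofReal (∑ i ∈ S, f i * |q i|) ≤ b := by
  rw [ENNReal.ofReal_sum_of_nonneg fun i hi => mul_nonneg (hf i hi) (abs_nonneg _)]
  calc ∑ i ∈ S, ENNReal.ofReal (f i * |q i|) ≤ ∑ i ∈ S, ENNReal.ofReal (f i) * b := by
        refine Finset.sum_le_sum fun i hi => ?_
        rw [ENNReal.ofReal_mul (hf i hi)]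
        gcongr
        exact hq i hi
    _ = b := by
        rw [← Finset.sum_mul, ← ENNReal.ofReal_sum_of_nonneg hf, hf1, ENNReal.ofReal_one, one_mul]

/-- The error in the upper gradient of `patch φ η` caused by the derivatives of the partition of
unity. Those derivatives sum to zero, so only the deviations `η m - û` from a common function
enter. -/
def patchError {Y : Type*} (L : ℕ → ℝ≥0) (Q : ℕ → Set Y) (η : ℕ → Y → ℝ) (û : Y → ℝ) (x : Y) :
    ℝ≥0∞ :=
  ∑' m, (Q m).indicator (fun x => L m * ENNReal.ofReal |η m x - û x|) x

theorem ofReal_sum_abs_mul_abs_sub_le_patchError {Y : Type*} {L : ℕ → ℝ≥0} {Q : ℕ → Set Y}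
    {η : ℕ → Y → ℝ} {û : Y → ℝ} {x : Y} {S : Finset ℕ} (hS : ∀ m ∈ S, x ∈ Q m) {p : ℕ → ℝ}
    (hp : ∀ m ∈ S, |p m| ≤ L m) :
    ENNReal.ofReal (∑ m ∈ S, |p m| * |η m x - û x|) ≤ patchError L Q η û x := by
  rw [ENNReal.ofReal_sum_of_nonneg fun m _ => by positivity]
  refine le_trans (Finset.sum_le_sum fun m hm => ?_) (ENNReal.sum_le_tsum S)
  rw [indicator_of_mem (hS m hm), ENNReal.ofReal_mul (abs_nonneg _)]
  gcongr
  exact (ENNReal.ofReal_le_ofReal (hp m hm)).trans_eq (ENNReal.ofReal_coe_nnreal)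

theorem IsLipschitzPartition.ofReal_abs_deriv_patch_le {Y : Type*} [MetricSpace Y]
    {φ : ℕ → Y → ℝ} {L : ℕ → ℝ≥0} {Q : ℕ → Set Y} {W : Set Y} {η : ℕ → Y → ℝ}
    (hφ : IsLipschitzPartition φ L Q W) {γ : Curve Y} {t : ℝ} (ht : t ∈ Ioo 0 γ.len)
    (htW : γ.toFun t ∈ W) (hφd : ∀ m, DifferentiableAt ℝ (φ m ∘ γ.toFun) t)
    (hηd : ∀ m, γ.toFun t ∈ Q m → DifferentiableAt ℝ (η m ∘ γ.toFun) t) {b : ℝ≥0∞}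
    (hb : ∀ m, γ.toFun t ∈ Q m → ENNReal.ofReal |deriv (η m ∘ γ.toFun) t| ≤ b) {D : ℝ}
    (hD : HasDerivAt (patch φ η ∘ γ.toFun) D t) (û : Y → ℝ) :
    ENNReal.ofReal |D| ≤ b + patchError L Q η û (γ.toFun t) := by
  obtain ⟨S, hSQ, hS⟩ := hφ.exists_finset _ htW
  have hγ : ContinuousAt γ.toFun t := γ.continuousOn.continuousAt (Icc_mem_nhds ht.1 ht.2)
  have hnear := hγ.eventually hS
  set p : ℕ → ℝ := fun m => deriv (φ m ∘ γ.toFun) t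
  set q : ℕ → ℝ := fun m => deriv (η m ∘ γ.toFun) t
  have hp : ∀ m, HasDerivAt (φ m ∘ γ.toFun) (p m) t := fun m => (hφd m).hasDerivAt
  have hq : ∀ m ∈ S, HasDerivAt (η m ∘ γ.toFun) (q m) t :=
    fun m hm => (hηd m (hSQ m hm)).hasDerivAt
  have hp0 : ∑ m ∈ S, p m = 0 :=
    (HasDerivAt.fun_sum fun m _ => hp m).unique <|
      (hasDerivAt_const t (1 : ℝ)).congr_of_eventuallyEq (hnear.mono fun s hs => hs.2)
  have hDsum : D = ∑ m ∈ S, (p m * η m (γ.toFun t) + φ m (γ.toFun t) * q m) :=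
    hD.unique <| (HasDerivAt.fun_sum fun m hm => (hp m).mul (hq m hm)).congr_of_eventuallyEq
      (hnear.mono fun s hs => patch_eq_sum hs.1)
  rw [hDsum]
  refine (ENNReal.ofReal_le_ofReal (abs_sum_mul_add_mul_le (û (γ.toFun t)) hp0
    fun m _ => hφ.nonneg m _)).trans (ENNReal.ofReal_add_le.trans (add_le_add ?_ ?_))
  · exact ofReal_sum_mul_le_of_sum_eq_one (fun m _ => hφ.nonneg m _) hS.self_of_nhds.2
      fun m hm => hb m (hSQ m hm)
  · exact ofReal_sum_abs_mul_abs_sub_le_patchError hSQ fun m _ =>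
      Curve.abs_deriv_comp_le_of_lipschitzWith (hφ.lipschitzWith m) ht (hp m)

theorem IsLipschitzPartition.isDerivUpperGradientOn_patch {Y : Type*} [MetricSpace Y]
    [MeasurableSpace Y] {μ : Measure Y} {φ : ℕ → Y → ℝ} {L : ℕ → ℝ≥0} {Q : ℕ → Set Y} {W : Set Y}
    {η : ℕ → Y → ℝ} (hφ : IsLipschitzPartition φ L Q W) {O : ℕ → Set Y} (hO : ∀ m, IsOpen (O m))
    (hQO : ∀ m, Q m ⊆ O m) (hηL : ∀ m, LocLipOn (η m) (O m)) {g : Y → ℝ≥0∞}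
    (hηg : ∀ m, IsDerivUpperGradientOn μ (η m) g (O m)) (û : Y → ℝ) :
    IsDerivUpperGradientOn μ (patch φ η) (fun x => g x + patchError L Q η û x) W := by
  have hφL : ∀ m, LocLipOn (φ m) univ := fun m => locLipOn_of_lipschitzWith (hφ.lipschitzWith m)
  filter_upwards [eventually_countable_forall.2 hηg] with γ hγ
  filter_upwards [ae_all_iff.2 hγ,
    ae_all_iff.2 fun m => (hηL m).ae_differentiableAt_comp_curve (hO m) γ,
    ae_all_iff.2 fun m => (hφL m).ae_differentiableAt_comp_curve isOpen_univ γ]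
    with t hg hηd hφd ht D hD
  have hηt : ∀ m, γ.toFun t ∈ Q m → DifferentiableAt ℝ (η m ∘ γ.toFun) t :=
    fun m hm => hηd m ⟨ht.1, hQO m hm⟩
  exact hφ.ofReal_abs_deriv_patch_le ht.1 ht.2 (fun m => hφd m ⟨ht.1, mem_univ _⟩) hηt
    (fun m hm => hg m ⟨ht.1, hQO m hm⟩ _ (hηt m hm).hasDerivAt) hD û

section PatchError

variable {Y : Type*} [MeasurableSpace Y]
  {L : ℕ → ℝ≥0} {Q : ℕ → Set Y} {η : ℕ → Y → ℝ} {û : Y → ℝ}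

theorem measurable_patchError (hQ : ∀ m, MeasurableSet (Q m)) (hη : ∀ m, Measurable (η m))
    (hû : Measurable û) : Measurable (patchError L Q η û) :=
  .tsum fun m =>
    ((((hη m).sub hû).abs.ennreal_ofReal).const_mul _).indicator (hQ m)

theorem lintegral_patchError_eq {μ : Measure Y} (hQ : ∀ m, MeasurableSet (Q m))
    (hη : ∀ m, Measurable (η m)) (hû : Measurable û) :
    ∫⁻ x, patchError L Q η û x ∂μ =
      ∑' m, L m * ∫⁻ x in Q m, ENNReal.ofReal |η m x - û x| ∂μ := by
  have hdist : ∀ m, Measurable fun x => ENNReal.ofReal |η m x - û x| :=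
    fun m => ((hη m).sub hû).abs.ennreal_ofReal
  simp only [patchError]
  rw [lintegral_tsum fun m => (((hdist m).const_mul _).indicator (hQ m)).aemeasurable]
  exact tsum_congr fun m => by rw [lintegral_indicator (hQ m), lintegral_const_mul _ (hdist m)]

end PatchError

namespace IsCapacityCutoff

variable {μ : Measure X} {G W C Q : Set X} {ε τ : ℝ≥0∞} {û : X → ℝ} {g : X → ℝ≥0∞}

theorem exists_approx_near [ProperSpace X] [IsLocallyFiniteMeasure μ]
    (hc : IsCapacityCutoff μ G ε û g) (hG : IsOpen G) (hQ : IsCompact Q) (hC : IsClosed C)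
    (hQC : Q ∩ C ⊆ G) (ν : Measure X) [IsFiniteMeasure ν] (L : ℝ≥0) (hτ : 0 < τ) :
    ∃ (O : Set X) (η : X → ℝ), IsOpen O ∧ Q ⊆ O ∧ Measurable η ∧ (∀ x, η x ∈ Icc (0 : ℝ) 1) ∧
      LocLipOn η O ∧ IsDerivUpperGradientOn μ η g O ∧
      (∀ z ∈ Q ∩ C, ∀ᶠ x in 𝓝 z, η x = 1) ∧ ∫⁻ x, ENNReal.ofReal |η x - û x| ∂ν ≤ τ ∧
      L * ∫⁻ x in Q, ENNReal.ofReal |η x - û x| ∂μ ≤ τ := by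
  obtain ⟨B, hB, hQB⟩ := exists_compact_superset hQ
  obtain ⟨K, hK, hQK, hKG⟩ := exists_compact_between (hQ.inter_right hC) hG hQC
  have : IsFiniteMeasure (μ.restrict Q) := ⟨by simpa using hQ.measure_lt_top⟩
  obtain ⟨η, hηm, hη, hηL, hηg, hη1, hητ⟩ :=
    hc.exists_approx B K hB hK hKG (ν + L • μ.restrict Q) inferInstance τ hτ
  rw [lintegral_add_measure, lintegral_smul_measure] at hητ
  exact ⟨interior B, η, isOpen_interior, hQB, hηm, hη, hηL, hηg,
    fun z hz => mem_of_superset (mem_interior_iff_mem_nhds.1 (hQK hz)) hη1,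
    le_self_add.trans hητ.le, le_add_self.trans hητ.le⟩

theorem exists_isUnitGradientPair [ProperSpace X] [IsLocallyFiniteMeasure μ]
    (hc : IsCapacityCutoff μ G ε û g) (hG : IsOpen G) (hW : IsOpen W) (hC : IsClosed C)
    (hWC : W ∩ C ⊆ G) (ν : Measure X) [IsFiniteMeasure ν] (hτ : 0 < τ) :
    ∃ η gη, IsUnitGradientPair μ η gη W ∧ ∫⁻ x, gη x ∂μ ≤ ε + τ ∧
      (∀ z ∈ W ∩ C, ∀ᶠ x in 𝓝 z, η x = 1) ∧
      ∫⁻ x in W, ENNReal.ofReal |η x - û x| ∂ν ≤ τ := by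
  obtain ⟨δ, hδ, hδτ⟩ := ENNReal.exists_pos_sum_of_countable' hτ.ne' ℕ
  obtain ⟨φ, L, Q, hφ⟩ := exists_isLipschitzPartition hW
  choose O η hO hQO hηm hη hηL hηg hη1 hην hημ using fun m =>
    hc.exists_approx_near hG (hφ.isCompact m) hC
      ((inter_subset_inter_left C (hφ.subset m)).trans hWC) ν (L m) (hδ m)
  have hQ : ∀ m, MeasurableSet (Q m) := fun m => (hφ.isCompact m).measurableSet
  refine ⟨patch φ η, fun x => g x + patchError L Q η û x, ?_, ?_, fun z hz => ?_, ?_⟩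
  · exact ⟨hφ.patch_mem_Icc hη, hφ.locLipOn_patch hη hO hQO hηL,
      (hc.measurable_gradient.add (measurable_patchError hQ hηm hc.measurable)).aemeasurable,
      hφ.isDerivUpperGradientOn_patch hO hQO hηL hηg û⟩
  · rw [lintegral_add_left hc.measurable_gradient, lintegral_patchError_eq hQ hηm hc.measurable]
    exact add_le_add hc.lintegral_gradient_le ((ENNReal.tsum_le_tsum hημ).trans hδτ.le)
  · exact hφ.eventually_patch_eq_one hz.1 fun m hm => hη1 m z ⟨hm, hz.2⟩
  · calc ∫⁻ x in W, ENNReal.ofReal |patch φ η x - û x| ∂ν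
        ≤ ∫⁻ x in W, ∑' m, ENNReal.ofReal |η m x - û x| ∂ν :=
          setLIntegral_mono' hW.measurableSet fun x hx => hφ.ofReal_abs_patch_sub_le hx _
      _ ≤ ∫⁻ x, ∑' m, ENNReal.ofReal |η m x - û x| ∂ν := setLIntegral_le_lintegral _ _
      _ = ∑' m, ∫⁻ x, ENNReal.ofReal |η m x - û x| ∂ν :=
          lintegral_tsum fun m => ((hηm m).sub hc.measurable).abs.ennreal_ofReal.aemeasurable
      _ ≤ τ := (ENNReal.tsum_le_tsum hην).trans hδτ.le

end IsCapacityCutoff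

/-! ### Gluing -/

/-- The convex combination of `w` and `v` which equals `v` where `η = 1` and `w` where `η = 0`. -/
def glue {Y : Type*} (η w v : Y → ℝ) (x : Y) : ℝ :=
  (1 - η x) * w x + η x * v x

theorem abs_glue_deriv_le {a w v a' w' v' : ℝ} (ha : a ∈ Icc (0 : ℝ) 1) (hw : w ∈ Icc (0 : ℝ) 1)
    (hv : v ∈ Icc (0 : ℝ) 1) :
    |-a' * w + (1 - a) * w' + (a' * v + a * v')| ≤ (1 - a) * |w'| + a * |v'| + |a'| := by
  have hvw : |v - w| ≤ 1 := abs_le.2 ⟨by linarith [hv.1, hw.2], by linarith [hv.2, hw.1]⟩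
  calc |-a' * w + (1 - a) * w' + (a' * v + a * v')|
      = |(1 - a) * w' + a * v' + a' * (v - w)| := by congr 1; ring
    _ ≤ |(1 - a) * w'| + |a * v'| + |a' * (v - w)| := abs_add_three _ _ _
    _ = (1 - a) * |w'| + a * |v'| + |a'| * |v - w| := by
        rw [abs_mul, abs_mul, abs_mul, abs_of_nonneg ha.1, abs_of_nonneg (sub_nonneg.2 ha.2)]
    _ ≤ (1 - a) * |w'| + a * |v'| + |a'| := by
        gcongr
        exact mul_le_of_le_one_right (abs_nonneg _) hvw

namespace IsUnitGradientPair

variable {Y : Type*} [MetricSpace Y] [MeasurableSpace Y] {μ : Measure Y} {W Ω : Set Y}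
  {η w v : Y → ℝ} {gη gw gv : Y → ℝ≥0∞}

theorem zero : IsUnitGradientPair μ 0 0 Ω where
  mem_Icc _ := ⟨le_rfl, zero_le_one⟩
  locLipOn := locLipOn_of_lipschitzWith (LipschitzWith.const 0)
  aemeasurable := aemeasurable_const
  isDerivUpperGradientOn := .of_forall fun γ => .of_forall fun t _ D hD => by
    rw [hD.unique (hasDerivAt_const t (0 : ℝ))]
    simp

theorem mono_set (hv : IsUnitGradientPair μ v gv Ω) (h : W ⊆ Ω) : IsUnitGradientPair μ v gv W :=
  ⟨hv.mem_Icc, hv.locLipOn.mono h, hv.aemeasurable, hv.isDerivUpperGradientOn.mono_set h⟩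

theorem abs_le_one (hv : IsUnitGradientPair μ v gv Ω) (x : Y) : |v x| ≤ 1 :=
  abs_le.2 ⟨by linarith [(hv.mem_Icc x).1], (hv.mem_Icc x).2⟩

theorem one_sub_mem_Icc (hη : IsUnitGradientPair μ η gη W) (x : Y) : 1 - η x ∈ Icc (0 : ℝ) 1 :=
  ⟨sub_nonneg.2 (hη.mem_Icc x).2, sub_le_self _ (hη.mem_Icc x).1⟩

theorem aemeasurable_restrict [BorelSpace Y] (hv : IsUnitGradientPair μ v gv Ω) (hΩ : IsOpen Ω)
    (hW : W ⊆ Ω) : AEMeasurable v (μ.restrict W) :=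
  (hv.locLipOn.continuousOn.aemeasurable hΩ.measurableSet).mono_measure
    (Measure.restrict_mono hW le_rfl)

theorem glue_mem_Icc (hη : IsUnitGradientPair μ η gη W) (hw : IsUnitGradientPair μ w gw Ω)
    (hv : IsUnitGradientPair μ v gv W) (x : Y) : glue η w v x ∈ Icc (0 : ℝ) 1 :=
  convex_Icc 0 1 (hw.mem_Icc x) (hv.mem_Icc x) (hη.one_sub_mem_Icc x).1 (hη.mem_Icc x).1
    (sub_add_cancel 1 (η x))

theorem locLipOn_glue (hη : IsUnitGradientPair μ η gη W) (hw : IsUnitGradientPair μ w gw Ω)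
    (hv : IsUnitGradientPair μ v gv W) (hW : IsOpen W) (hΩ : IsOpen Ω)
    (hη1 : ∀ z ∈ W \ Ω, ∀ᶠ x in 𝓝 z, η x = 1) : LocLipOn (glue η w v) W := by
  refine .of_forall_eventuallyEq fun z hz => ?_
  by_cases hzΩ : z ∈ Ω
  · have hηO := hη.locLipOn.mono (inter_subset_left (t := Ω))
    have hη' := hηO.comp_lipschitzWith ((LipschitzWith.const (1 : ℝ)).sub LipschitzWith.id)
    refine ⟨W ∩ Ω, (hW.inter hΩ).mem_nhds ⟨hz, hzΩ⟩, glue η w v, .add (.mul hη'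
      (hw.locLipOn.mono inter_subset_right) (fun x _ => ?_) fun x _ => hw.abs_le_one x) (.mul hηO
      (hv.locLipOn.mono inter_subset_left) (fun x _ => hη.abs_le_one x)
      fun x _ => hv.abs_le_one x), .rfl⟩
    exact abs_le.2 ⟨by linarith [(hη.one_sub_mem_Icc x).1], (hη.one_sub_mem_Icc x).2⟩
  · refine ⟨W, hW.mem_nhds hz, v, hv.locLipOn, ?_⟩
    filter_upwards [hη1 z ⟨hz, hzΩ⟩] with x hx
    simp [glue, hx]

theorem isDerivUpperGradientOn_glue (hη : IsUnitGradientPair μ η gη W)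
    (hw : IsUnitGradientPair μ w gw Ω) (hv : IsUnitGradientPair μ v gv W) (hW : IsOpen W)
    (hΩ : IsOpen Ω) (hη1 : ∀ z ∈ W \ Ω, ∀ᶠ x in 𝓝 z, η x = 1) :
    IsDerivUpperGradientOn μ (glue η w v) (fun x => Ω.indicator
      (fun x => ENNReal.ofReal (1 - η x) * gw x) x + ENNReal.ofReal (η x) * gv x + gη x) W := by
  filter_upwards [hη.isDerivUpperGradientOn, hw.isDerivUpperGradientOn,
    hv.isDerivUpperGradientOn] with γ hγη hγw hγv
  filter_upwards [hγη, hγw, hγv, hη.locLipOn.ae_differentiableAt_comp_curve hW γ,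
    hw.locLipOn.ae_differentiableAt_comp_curve hΩ γ,
    hv.locLipOn.ae_differentiableAt_comp_curve hW γ] with t hηt hwt hvt hηd hwd hvd ht D hD
  have hη' := (hηd ht).hasDerivAt
  have hv' := (hvd ht).hasDerivAt
  by_cases htΩ : γ.toFun t ∈ Ω
  · have hw' := (hwd ⟨ht.1, htΩ⟩).hasDerivAt
    have h0 := hη.mem_Icc (γ.toFun t)
    rw [hD.unique (((hη'.const_sub 1).mul hw').add (hη'.mul hv')), indicator_of_mem htΩ]
    refine (ENNReal.ofReal_le_ofReal (abs_glue_deriv_le h0 (hw.mem_Icc _) (hv.mem_Icc _))).trans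
      (ENNReal.ofReal_add_le.trans (add_le_add (ENNReal.ofReal_add_le.trans ?_) (hηt ht _ hη')))
    rw [ENNReal.ofReal_mul h0.1, ENNReal.ofReal_mul (sub_nonneg.2 h0.2)]
    gcongr
    exacts [hwt ⟨ht.1, htΩ⟩ _ hw', hvt ht _ hv']
  · have hev := hη1 _ ⟨ht.2, htΩ⟩
    have hγt : ContinuousAt γ.toFun t := γ.continuousOn.continuousAt (Icc_mem_nhds ht.1.1 ht.1.2)
    have heq : glue η w v ∘ γ.toFun =ᶠ[𝓝 t] v ∘ γ.toFun :=
      (hγt.eventually hev).mono fun s hs => by simp [glue, hs]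
    rw [hD.unique (hv'.congr_of_eventuallyEq heq), indicator_of_notMem htΩ, zero_add,
      hev.self_of_nhds, ENNReal.ofReal_one, one_mul]
    exact (hvt ht _ hv').trans le_self_add

theorem exists_glue [BorelSpace Y] (hη : IsUnitGradientPair μ η gη W)
    (hw : IsUnitGradientPair μ w gw Ω) (hv : IsUnitGradientPair μ v gv W) (hW : IsOpen W)
    (hΩ : IsOpen Ω) (hη1 : ∀ z ∈ W \ Ω, ∀ᶠ x in 𝓝 z, η x = 1) :
    ∃ g, IsUnitGradientPair μ (glue η w v) g W ∧ ∫⁻ x in W, g x ∂μ =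
      ∫⁻ x in W ∩ Ω, ENNReal.ofReal (1 - η x) * gw x ∂μ +
        ∫⁻ x in W, ENNReal.ofReal (η x) * gv x ∂μ + ∫⁻ x in W, gη x ∂μ := by
  have hηm := hη.aemeasurable_restrict hW subset_rfl
  have hgw : AEMeasurable (fun x => ENNReal.ofReal (1 - η x) * gw x) (μ.restrict W) :=
    (hηm.const_sub 1).ennreal_ofReal.mul hw.aemeasurable.restrict
  have hgv : AEMeasurable (fun x => ENNReal.ofReal (η x) * gv x) (μ.restrict W) :=
    hηm.ennreal_ofReal.mul hv.aemeasurable.restrict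
  have hgη := hη.aemeasurable.restrict (s := W)
  refine ⟨W.indicator _, ⟨hη.glue_mem_Icc hw hv, hη.locLipOn_glue hw hv hW hΩ hη1,
    (aemeasurable_indicator_iff hW.measurableSet).2
      (((hgw.indicator hΩ.measurableSet).add hgv).add hgη),
    (hη.isDerivUpperGradientOn_glue hw hv hW hΩ hη1).mono fun x hx =>
      (indicator_of_mem (f := _ + gη) hx).ge⟩, ?_⟩
  rw [setLIntegral_indicator hW.measurableSet, inter_self]
  simp only [Pi.add_apply]
  rw [lintegral_add_right' _ hgη, lintegral_add_right' _ hgv,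
    setLIntegral_indicator hΩ.measurableSet, inter_comm]

end IsUnitGradientPair

section Integrals

variable {Y : Type*} [MeasurableSpace Y] {ν : Measure Y} {η û : Y → ℝ} {g : Y → ℝ≥0∞}

theorem lintegral_ofReal_abs_sub_le {f f' : Y → ℝ} (hf : AEMeasurable f ν)
    (hf' : AEMeasurable f' ν) (f'' : Y → ℝ) :
    ∫⁻ x, ENNReal.ofReal |f x - f'' x| ∂ν ≤
      ∫⁻ x, ENNReal.ofReal |f x - f' x| ∂ν + ∫⁻ x, ENNReal.ofReal |f' x - f'' x| ∂ν := by
  have hsub : AEMeasurable (fun x => ENNReal.ofReal |f x - f' x|) ν :=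
    (hf.sub hf').abs.ennreal_ofReal
  rw [← lintegral_add_left' hsub]
  exact lintegral_mono fun x =>
    (ENNReal.ofReal_le_ofReal (abs_sub_le _ _ _)).trans ENNReal.ofReal_add_le

theorem lintegral_one_sub_mul_add_le (hη : ∀ x, η x ≤ 1) (hû : ∀ x, 0 ≤ û x)
    (hûm : AEMeasurable û ν) (hg : AEMeasurable g ν) :
    ∫⁻ x, ENNReal.ofReal (1 - η x) * g x ∂ν + ∫⁻ x, ENNReal.ofReal (û x) * g x ∂ν ≤
      ∫⁻ x, g x ∂ν + ∫⁻ x, ENNReal.ofReal |η x - û x| * g x ∂ν := by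
  have hûg : AEMeasurable (fun x => ENNReal.ofReal (û x) * g x) ν := hûm.ennreal_ofReal.mul hg
  rw [← lintegral_add_right' _ hûg, ← lintegral_add_left' hg]
  refine lintegral_mono fun x => ?_
  calc ENNReal.ofReal (1 - η x) * g x + ENNReal.ofReal (û x) * g x
      = ENNReal.ofReal (1 - (η x - û x)) * g x := by
        rw [← add_mul, ← ENNReal.ofReal_add (sub_nonneg.2 (hη x)) (hû x), sub_sub_eq_add_sub,
          add_sub_right_comm]
    _ ≤ ENNReal.ofReal (1 + |η x - û x|) * g x := by
        gcongr
        linarith [neg_abs_le (η x - û x)]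
    _ ≤ g x + ENNReal.ofReal |η x - û x| * g x := by
        rw [ENNReal.ofReal_add zero_le_one (abs_nonneg _), ENNReal.ofReal_one, add_mul, one_mul]

theorem lintegral_ofReal_mul_le_add (hûm : AEMeasurable û ν) (hg : AEMeasurable g ν) :
    ∫⁻ x, ENNReal.ofReal (η x) * g x ∂ν ≤
      ∫⁻ x, ENNReal.ofReal (û x) * g x ∂ν + ∫⁻ x, ENNReal.ofReal |η x - û x| * g x ∂ν := by
  have hûg : AEMeasurable (fun x => ENNReal.ofReal (û x) * g x) ν := hûm.ennreal_ofReal.mul hg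
  rw [← lintegral_add_left' hûg]
  refine lintegral_mono fun x => ?_
  rw [← add_mul]
  gcongr
  refine le_trans (ENNReal.ofReal_le_ofReal ?_) ENNReal.ofReal_add_le
  linarith [le_abs_self (η x - û x)]

theorem lintegral_abs_glue_sub_le {w v : Y → ℝ} {U G W : Set Y} (hη : ∀ x, η x ∈ Icc (0 : ℝ) 1)
    (hû : ∀ x ∈ G, û x = 1) (hw : ∀ x, w x ∈ Icc (0 : ℝ) 1) (hv : ∀ x, v x ∈ Icc (0 : ℝ) 1)
    (hG : MeasurableSet G) (hW : MeasurableSet W) (hWU : W ⊆ U ∪ G) :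
    ∫⁻ x in W, ENNReal.ofReal |glue η w v x - v x| ∂ν ≤
      ∫⁻ x in U, ENNReal.ofReal |w x - v x| ∂ν + ∫⁻ x in W, ENNReal.ofReal |η x - û x| ∂ν := by
  have hglue : ∀ x, |glue η w v x - v x| = (1 - η x) * |w x - v x| := fun x => by
    rw [show glue η w v x - v x = (1 - η x) * (w x - v x) by simp only [glue]; ring, abs_mul,
      abs_of_nonneg (sub_nonneg.2 (hη x).2)]
  have honU : ∀ x, |glue η w v x - v x| ≤ |w x - v x| := fun x => by
    rw [hglue]
    exact mul_le_of_le_one_left (abs_nonneg _) (sub_le_self _ (hη x).1)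
  have honG : ∀ x ∈ G, |glue η w v x - v x| ≤ |η x - û x| := fun x hx => by
    have hwv : |w x - v x| ≤ 1 :=
      abs_le.2 ⟨by linarith [(hw x).1, (hv x).2], by linarith [(hw x).2, (hv x).1]⟩
    rw [hglue, hû x hx, abs_sub_comm (η x), abs_of_nonneg (sub_nonneg.2 (hη x).2)]
    exact mul_le_of_le_one_right (sub_nonneg.2 (hη x).2) hwv
  have hcover : W ⊆ U ∪ W ∩ G := fun x hx => (hWU hx).imp_right fun hxG => ⟨hx, hxG⟩
  refine (lintegral_mono_set hcover).trans ((lintegral_union_le _ _ _).trans (add_le_add ?_ ?_))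
  · exact lintegral_mono fun x => ENNReal.ofReal_le_ofReal (honU x)
  · exact (setLIntegral_mono' (hW.inter hG) fun x hx =>
      ENNReal.ofReal_le_ofReal (honG x hx.2)).trans (lintegral_mono_set inter_subset_left)

end Integrals

namespace IsCapacityCutoff

theorem mono {Y : Type*} [MetricSpace Y] [MeasurableSpace Y] {μ : Measure Y} {G : Set Y}
    {ε ε' : ℝ≥0∞} {û : Y → ℝ} {g : Y → ℝ≥0∞} (hc : IsCapacityCutoff μ G ε û g) (h : ε ≤ ε') :
    IsCapacityCutoff μ G ε' û g where
  __ := hc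
  lintegral_le := hc.lintegral_le.trans h
  lintegral_gradient_le := hc.lintegral_gradient_le.trans h

variable [ProperSpace X] {μ : Measure X} [IsLocallyFiniteMeasure μ] {G W Ω C B : Set X}
  {ε τ : ℝ≥0∞} {û w v : X → ℝ} {g k gw gv : X → ℝ≥0∞}

theorem exists_isUnitGradientPair_weighted (hc : IsCapacityCutoff μ G ε û g) (hG : IsOpen G)
    (hW : IsOpen W) (hC : IsClosed C) (hWC : W ∩ C ⊆ G) (hB : μ B ≠ ∞) (hk : AEMeasurable k μ)
    (hkW : ∫⁻ x in W, k x ∂μ ≠ ∞) (hτ : 0 < τ) :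
    ∃ η gη, IsUnitGradientPair μ η gη W ∧ ∫⁻ x, gη x ∂μ ≤ ε + τ ∧
      (∀ z ∈ W ∩ C, ∀ᶠ x in 𝓝 z, η x = 1) ∧
      ∫⁻ x in W ∩ B, ENNReal.ofReal |η x - û x| ∂μ ≤ τ ∧
      ∫⁻ x in W, ENNReal.ofReal |η x - û x| * k x ∂μ ≤ τ := by
  have : IsFiniteMeasure (μ.restrict B) := ⟨by simpa using hB.lt_top⟩
  have : IsFiniteMeasure ((μ.restrict W).withDensity k) := isFiniteMeasure_withDensity hkW
  obtain ⟨η, gη, hη, hgη, hη1, hητ⟩ := hc.exists_isUnitGradientPair hG hW hC hWC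
    (μ.restrict B + (μ.restrict W).withDensity k) hτ
  have hdist : AEMeasurable (fun x => ENNReal.ofReal |η x - û x|) (μ.restrict W) :=
    ((hη.aemeasurable_restrict hW subset_rfl).sub hc.measurable.aemeasurable).abs.ennreal_ofReal
  rw [Measure.restrict_add, lintegral_add_measure, Measure.restrict_restrict hW.measurableSet,
    restrict_withDensity hW.measurableSet, Measure.restrict_restrict hW.measurableSet, inter_self,
    lintegral_withDensity_eq_lintegral_mul₀ hk.restrict hdist, mul_comm] at hητ
  exact ⟨η, gη, hη, hgη, hη1, le_self_add.trans hητ, le_add_self.trans hητ⟩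

theorem exists_glue (hc : IsCapacityCutoff μ G ε û g) (hG : IsOpen G) (hW : IsOpen W)
    (hΩ : IsOpen Ω) (hWΩ : W \ Ω ⊆ G) (hw : IsUnitGradientPair μ w gw Ω)
    (hv : IsUnitGradientPair μ v gv W) (hgw : ∫⁻ x in W ∩ Ω, gw x ∂μ ≠ ∞)
    (hgv : ∫⁻ x in W, gv x ∂μ ≠ ∞) (hB : μ B ≠ ∞) (hτ : 0 < τ) :
    ∃ η g', (∀ x, η x ∈ Icc (0 : ℝ) 1) ∧ IsUnitGradientPair μ (glue η w v) g' W ∧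
      ∫⁻ x in W, g' x ∂μ + ∫⁻ x in W ∩ Ω, ENNReal.ofReal (û x) * gw x ∂μ ≤
        ∫⁻ x in W ∩ Ω, gw x ∂μ + ∫⁻ x in W, ENNReal.ofReal (û x) * gv x ∂μ + (ε + 2 * τ) ∧
      ∫⁻ x in W ∩ B, ENNReal.ofReal |η x - û x| ∂μ ≤ τ := by
  have hkm : AEMeasurable (Ω.indicator gw + gv) μ :=
    (hw.aemeasurable.indicator hΩ.measurableSet).add hv.aemeasurable
  have hkW : ∫⁻ x in W, (Ω.indicator gw + gv) x ∂μ ≠ ∞ := by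
    simp only [Pi.add_apply]
    rw [lintegral_add_right' _ hv.aemeasurable.restrict, setLIntegral_indicator hΩ.measurableSet,
      inter_comm]
    exact ENNReal.add_ne_top.2 ⟨hgw, hgv⟩
  obtain ⟨η, gη, hη, hgη, hη1, hητ, hηk⟩ :=
    hc.exists_isUnitGradientPair_weighted hG hW hΩ.isClosed_compl hWΩ hB hkm hkW hτ
  obtain ⟨g', hg', hg'W⟩ := hη.exists_glue hw hv hW hΩ hη1
  have hηm := hη.aemeasurable_restrict hW subset_rfl
  refine ⟨η, g', hη.mem_Icc, hg', ?_, hητ⟩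
  have hdist : AEMeasurable (fun x => ENNReal.ofReal |η x - û x| * gv x) (μ.restrict W) :=
    (hηm.sub hc.measurable.aemeasurable).abs.ennreal_ofReal.mul hv.aemeasurable.restrict
  have herror : ∫⁻ x in W ∩ Ω, ENNReal.ofReal |η x - û x| * gw x ∂μ +
      ∫⁻ x in W, ENNReal.ofReal |η x - û x| * gv x ∂μ ≤ τ := by
    refine Eq.trans_le ?_ hηk
    simp only [Pi.add_apply, mul_add, ← indicator_mul_right Ω fun x => ENNReal.ofReal |η x - û x|]
    rw [lintegral_add_right' _ hdist, setLIntegral_indicator hΩ.measurableSet, inter_comm]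
  have hwloss := lintegral_one_sub_mul_add_le (ν := μ.restrict (W ∩ Ω)) (fun x => (hη.mem_Icc x).2)
    (fun x => (hc.mem_Icc x).1) hc.measurable.aemeasurable hw.aemeasurable.restrict
  have hvgain := lintegral_ofReal_mul_le_add (ν := μ.restrict W) (η := η)
    hc.measurable.aemeasurable hv.aemeasurable.restrict
  have hgηW : ∫⁻ x in W, gη x ∂μ ≤ ε + τ := (setLIntegral_le_lintegral _ _).trans hgη
  rw [hg'W]
  refine (Eq.le (by ring)).trans ((add_le_add (add_le_add hwloss hvgain) hgηW).trans ?_)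
  exact (Eq.le (by ring)).trans ((add_le_add_right herror (∫⁻ x in W ∩ Ω, gw x ∂μ +
    ∫⁻ x in W, ENNReal.ofReal (û x) * gv x ∂μ + (ε + τ))).trans (Eq.le (by ring)))

theorem exists_damping (hc : IsCapacityCutoff μ G ε û g) (hG : IsOpen G) (hΩ : IsOpen Ω)
    (hv : IsUnitGradientPair μ v gv Ω) (hgv : ∫⁻ x in Ω, gv x ∂μ ≠ ∞) (hB : μ B ≠ ∞)
    (hτ : 0 < τ) :
    ∃ h g', IsUnitGradientPair μ h g' Ω ∧
      ∫⁻ x in Ω, g' x ∂μ + ∫⁻ x in Ω, ENNReal.ofReal (û x) * gv x ∂μ ≤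
        ∫⁻ x in Ω, gv x ∂μ + (ε + 2 * τ) ∧
      ∫⁻ x in Ω ∩ B, ENNReal.ofReal |h x - v x| ∂μ ≤ ε + τ := by
  obtain ⟨η, g', hη, hg', hle, hητ⟩ := hc.exists_glue hG hΩ hΩ (by simp) hv .zero
    (by simpa using hgv) (by simp) hB hτ
  refine ⟨_, g', hg', by simpa using hle, ?_⟩
  calc ∫⁻ x in Ω ∩ B, ENNReal.ofReal |glue η v 0 x - v x| ∂μ
      ≤ ∫⁻ x in Ω ∩ B, ENNReal.ofReal (û x) + ENNReal.ofReal |η x - û x| ∂μ := by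
        refine lintegral_mono fun x => ?_
        have hηv : |glue η v 0 x - v x| ≤ η x := by
          rw [show glue η v 0 x - v x = -(η x * v x) by simp [glue]; ring, abs_neg,
            abs_of_nonneg (mul_nonneg (hη x).1 (hv.mem_Icc x).1)]
          exact mul_le_of_le_one_right (hη x).1 (hv.mem_Icc x).2
        refine (ENNReal.ofReal_le_ofReal (hηv.trans ?_)).trans ENNReal.ofReal_add_le
        linarith [le_abs_self (η x - û x)]
    _ = ∫⁻ x in Ω ∩ B, ENNReal.ofReal (û x) ∂μ +
          ∫⁻ x in Ω ∩ B, ENNReal.ofReal |η x - û x| ∂μ :=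
        lintegral_add_left hc.measurable.ennreal_ofReal _
    _ ≤ ε + τ := add_le_add ((setLIntegral_le_lintegral _ _).trans hc.lintegral_le) hητ

theorem exists_competitor {u : X → ℝ} {T : ℝ≥0∞} (hc : IsCapacityCutoff μ G τ û g) (hG : IsOpen G)
    (hΩ : IsOpen Ω) (hv : IsUnitGradientPair μ v gv Ω) (hgv : ∫⁻ x in Ω, gv x ∂μ < T + τ)
    (hB : μ B ≠ ∞) (hvu : ∫⁻ x in Ω ∩ B, ENNReal.ofReal |v x - u x| ∂μ < τ)
    (hε : ε ≤ ∫⁻ x in Ω, ENNReal.ofReal (û x) * gv x ∂μ) :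
    ∃ h g', IsUnitGradientPair μ h g' Ω ∧ ∫⁻ x in Ω, g' x ∂μ + ε ≤ T + 4 * τ ∧
      ∫⁻ x in Ω ∩ B, ENNReal.ofReal |h x - u x| ∂μ ≤ 3 * τ := by
  obtain ⟨h, g', hh, hg', hhv⟩ :=
    hc.exists_damping hG hΩ hv hgv.ne_top hB (pos_of_gt hvu)
  refine ⟨h, g', hh, ?_, ?_⟩
  · calc ∫⁻ x in Ω, g' x ∂μ + ε ≤ T + τ + (τ + 2 * τ) := by grw [hε, hg', hgv]
      _ = T + 4 * τ := by ring
  · calc ∫⁻ x in Ω ∩ B, ENNReal.ofReal |h x - u x| ∂μ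
        ≤ ∫⁻ x in Ω ∩ B, ENNReal.ofReal |h x - v x| ∂μ +
            ∫⁻ x in Ω ∩ B, ENNReal.ofReal |v x - u x| ∂μ :=
          lintegral_ofReal_abs_sub_le (hh.aemeasurable_restrict hΩ inter_subset_left)
            (hv.aemeasurable_restrict hΩ inter_subset_left) u
      _ ≤ τ + τ + τ := add_le_add hhv hvu.le
      _ = 3 * τ := by ring

end IsCapacityCutoff

/-! ### Lower semicontinuity -/

section LowerSemicontinuity

variable [ProperSpace X] {μ : Measure X} [IsLocallyFiniteMeasure μ] {U Ω W G K : Set X}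
  {u u' : X → ℝ} {ε τ L : ℝ≥0∞}

-- If the mass were not small, damping `v` by the cutoff would save a fixed amount of energy at no
-- cost in the limit, contradicting the definition of `tvOpen μ Ω u` as an infimum.
theorem exists_forall_lintegral_cutoff_mul_le (hΩ : IsOpen Ω) (hT : tvOpen μ Ω u ≠ ∞) (hε : 0 < ε)
    (hε' : ε ≠ ∞) :
    ∃ δ, 0 < δ ∧ ∃ K, IsCompact K ∧ ∀ v gv G û g, IsUnitGradientPair μ v gv Ω →
      ∫⁻ x in Ω, gv x ∂μ < tvOpen μ Ω u + δ →
      ∫⁻ x in Ω ∩ K, ENNReal.ofReal |v x - u x| ∂μ < δ →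
      IsOpen G → IsCapacityCutoff μ G δ û g → ∫⁻ x in Ω, ENNReal.ofReal (û x) * gv x ∂μ ≤ ε := by
  by_contra! hcon
  have hhalf : 0 < ε / 2 := ENNReal.half_pos hε.ne'
  have hcompetitor : ∀ K, IsCompact K → ∀ δ : ℝ≥0∞, 0 < δ → ∃ h g,
      IsUnitGradientPair μ h g Ω ∧ ∫⁻ x in Ω, g x ∂μ + ε / 2 ≤ tvOpen μ Ω u ∧
        ∫⁻ x in Ω ∩ K, ENNReal.ofReal |h x - u x| ∂μ ≤ δ := by
    intro K hK δ hδ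
    obtain ⟨τ, hτ, hτδ, hτε⟩ : ∃ τ, 0 < τ ∧ τ ≤ δ / 3 ∧ τ ≤ ε / 2 / 4 :=
      ⟨min (δ / 3) (ε / 2 / 4), by simp [hδ.ne', hε.ne'], min_le_left _ _, min_le_right _ _⟩
    obtain ⟨v, gv, G, û, g, hv, hgv, hvu, hG, hc, hlt⟩ := hcon τ hτ K hK
    obtain ⟨h, g', hh, hg', hhu⟩ :=
      hc.exists_competitor hG hΩ hv hgv hK.measure_ne_top hvu hlt.le
    refine ⟨h, g', hh, ?_, hhu.trans (ENNReal.mul_le_of_le_div' hτδ)⟩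
    refine (ENNReal.add_le_add_iff_right (a := ε / 2) (by finiteness)).1 ?_
    grw [add_assoc, ENNReal.add_halves, hg', ENNReal.mul_le_of_le_div' hτε]
  have hTpos : tvOpen μ Ω u ≠ 0 := by
    obtain ⟨h, g, -, hg, -⟩ := hcompetitor ∅ isCompact_empty 1 one_pos
    exact (hhalf.trans_le (le_add_self.trans hg)).ne'
  have hle : tvOpen μ Ω u ≤ tvOpen μ Ω u - ε / 2 :=
    tvOpen_le_of_forall_exists_isUnitGradientPair hΩ (tsub_le_self.trans_lt hT.lt_top)
      fun K hK δ hδ =>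
        let ⟨h, g, hh, hg, hhu⟩ := hcompetitor K hK δ hδ
        ⟨h, g, hh, ENNReal.le_sub_of_add_le_right (by finiteness) hg, hhu⟩
  exact (ENNReal.sub_lt_self hT hTpos hhalf.ne').not_ge hle

theorem exists_isUnitGradientPair_of_tvOpen_lt_of_cutoff {û v : X → ℝ} {g gv : X → ℝ≥0∞}
    (hc : IsCapacityCutoff μ G ε û g) (hG : IsOpen G) (hW : IsOpen W) (hUW : U ⊆ W)
    (hWU : W ⊆ U ∪ G) (hv : IsUnitGradientPair μ v gv W) (hgv : ∫⁻ x in W, gv x ∂μ ≠ ∞)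
    (hΩ : IsOpen Ω) (hUΩ : U ⊆ Ω) (hL : tvOpen μ Ω u' < L) (hu : AEMeasurable u μ)
    (hu' : AEMeasurable u' μ) (hu'mem : ∀ x, u' x ∈ Icc (0 : ℝ) 1) (hK : IsCompact K) (hτ : 0 < τ)
    (hvu : ∫⁻ x in W ∩ K, ENNReal.ofReal |v x - u x| ∂μ ≤ τ)
    (huu' : ∫⁻ x in U ∩ K, ENNReal.ofReal |u' x - u x| ∂μ ≤ τ) :
    ∃ h gh, IsUnitGradientPair μ h gh W ∧
      ∫⁻ x in W, gh x ∂μ ≤ L + ∫⁻ x in W, ENNReal.ofReal (û x) * gv x ∂μ + (ε + 2 * τ) ∧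
      ∫⁻ x in W ∩ K, ENNReal.ofReal |h x - u x| ∂μ ≤ 5 * τ := by
  obtain ⟨w, gw, hw, hgw, hwu'⟩ :=
    exists_isUnitGradientPair_of_tvOpen_lt hΩ hu'mem hL hK.measure_ne_top hτ
  have hgw' : ∫⁻ x in W ∩ Ω, gw x ∂μ ≤ L := (lintegral_mono_set inter_subset_right).trans hgw.le
  obtain ⟨η, gh, hη, hh, hgh, hητ⟩ := hc.exists_glue hG hW hΩ
    (fun x hx => (hWU hx.1).resolve_left fun hxU => hx.2 (hUΩ hxU)) hw hv
    ((lintegral_mono_set inter_subset_right).trans_lt hgw).ne_top hgv hK.measure_ne_top hτ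
  refine ⟨_, gh, hh, (le_self_add.trans hgh).trans (by gcongr), ?_⟩
  have hwv : ∫⁻ x in U ∩ K, ENNReal.ofReal |w x - v x| ∂μ ≤ τ + (τ + τ) := by
    have hvu' : ∫⁻ x in U ∩ K, ENNReal.ofReal |u x - v x| ∂μ ≤ τ := by
      simp_rw [abs_sub_comm (u _)]
      exact (lintegral_mono_set (inter_subset_inter_left _ hUW)).trans hvu
    calc ∫⁻ x in U ∩ K, ENNReal.ofReal |w x - v x| ∂μ
        ≤ ∫⁻ x in U ∩ K, ENNReal.ofReal |w x - u' x| ∂μ +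
            (∫⁻ x in U ∩ K, ENNReal.ofReal |u' x - u x| ∂μ +
              ∫⁻ x in U ∩ K, ENNReal.ofReal |u x - v x| ∂μ) := by
          grw [lintegral_ofReal_abs_sub_le
            (hw.aemeasurable_restrict hΩ (inter_subset_left.trans hUΩ)) hu'.restrict v,
            lintegral_ofReal_abs_sub_le hu'.restrict hu.restrict v]
      _ ≤ τ + (τ + τ) := by
          gcongr
          exact (lintegral_mono_set (inter_subset_inter_left _ hUΩ)).trans hwu'.le
  calc ∫⁻ x in W ∩ K, ENNReal.ofReal |glue η w v x - u x| ∂μ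
      ≤ ∫⁻ x in W ∩ K, ENNReal.ofReal |glue η w v x - v x| ∂μ +
          ∫⁻ x in W ∩ K, ENNReal.ofReal |v x - u x| ∂μ :=
        lintegral_ofReal_abs_sub_le (hh.aemeasurable_restrict hW inter_subset_left)
          (hv.aemeasurable_restrict hW inter_subset_left) u
    _ ≤ τ + (τ + τ) + τ + τ := by
        refine add_le_add ((lintegral_abs_glue_sub_le hη hc.eq_one hw.mem_Icc hv.mem_Icc
          hG.measurableSet (hW.measurableSet.inter hK.measurableSet) ?_).trans
            (add_le_add hwv hητ)) hvu
        exact fun x hx => (hWU hx.1).imp_left fun hxU => ⟨hxU, hx.2⟩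
    _ = 5 * τ := by ring

theorem exists_isOpen_tvOpen_lt_of_tv_lt {Y : Type*} [MetricSpace Y] [MeasurableSpace Y]
    {μ : Measure Y} {U : Set Y} {u : Y → ℝ} {c : ℝ≥0∞} (h : tv μ U u < c) :
    ∃ Ω, IsOpen Ω ∧ U ⊆ Ω ∧ tvOpen μ Ω u < c := by
  simpa only [tv, iInf_lt_iff, exists_prop] using h

theorem QuasiOpen.exists_isCapacityCutoff (hU : QuasiOpen μ U) (hε : 0 < ε) :
    ∃ G û g, IsOpen G ∧ IsOpen (U ∪ G) ∧ IsCapacityCutoff μ G ε û g := by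
  have hpos : 0 < (min ε 1).toReal := ENNReal.toReal_pos (by simp [hε.ne']) (by simp)
  obtain ⟨G, hG, hcap, hUG⟩ := hU _ hpos
  rw [ENNReal.ofReal_toReal (by simp)] at hcap
  obtain ⟨û, g, hc⟩ := PaperBV.exists_isCapacityCutoff hG hcap
  exact ⟨G, û, g, hG, hUG, hc.mono (min_le_left _ _)⟩

theorem tv_le_add_of_frequently_tv_lt {u' : ℕ → X → ℝ} (hU : QuasiOpen μ U)
    (hu : AEMeasurable u μ) (humem : ∀ x, u x ∈ Icc (0 : ℝ) 1) (htv : tv μ U u < ∞)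
    (hu' : ∀ i, AEMeasurable (u' i) μ) (hu'mem : ∀ i x, u' i x ∈ Icc (0 : ℝ) 1)
    (hconv : L1LocConv μ U u' u) (hL : L ≠ ∞) (hlt : ∃ᶠ i in atTop, tv μ U (u' i) < L)
    (hε : 0 < ε) (hε' : ε ≠ ∞) : tv μ U u ≤ L + 4 * ε := by
  obtain ⟨Ω, hΩ, hUΩ, hT⟩ := exists_isOpen_tvOpen_lt_of_tv_lt htv
  obtain ⟨δ, hδ, K₀, hK₀, hsmall⟩ := exists_forall_lintegral_cutoff_mul_le hΩ hT.ne hε hε'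
  obtain ⟨G, û, g, hG, hUG, hc⟩ := hU.exists_isCapacityCutoff (lt_min hε hδ)
  have hW : IsOpen ((U ∪ G) ∩ Ω) := hUG.inter hΩ
  have hUW : U ⊆ (U ∪ G) ∩ Ω := subset_inter subset_union_left hUΩ
  refine (iInf₂_le_of_le _ hW (iInf_le _ hUW)).trans
    (tvOpen_le_of_forall_exists_isUnitGradientPair hW (by finiteness) fun K hK τ hτ => ?_)
  obtain ⟨σ, hσ, hστ, hσε⟩ : ∃ σ, 0 < σ ∧ σ ≤ τ / 5 ∧ σ ≤ ε :=
    ⟨min (τ / 5) ε, by simp [hτ.ne', hε], min_le_left _ _, min_le_right _ _⟩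
  obtain ⟨v, gv, hv, hgv, hvu⟩ := exists_isUnitGradientPair_of_tvOpen_lt hΩ humem
    (ENNReal.lt_add_right hT.ne hδ.ne') (hK₀.union hK).measure_ne_top (lt_min hδ hσ)
  have hcutoff : ∫⁻ x in Ω, ENNReal.ofReal (û x) * gv x ∂μ ≤ ε :=
    hsmall v gv G û g hv hgv ((lintegral_mono_set (inter_subset_inter_right _
      subset_union_left)).trans_lt (hvu.trans_le (min_le_left _ _))) hG
      (hc.mono (min_le_right _ _))
  obtain ⟨i, hiL, hiu⟩ := (hlt.and_eventually ((tendsto_setLIntegral_inter_of_local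
    (fun i x => ofReal_abs_sub_le_one (hu'mem i x) (humem x)) hconv
      hK.measure_ne_top).eventually_lt_const hσ)).exists
  obtain ⟨Ω', hΩ', hUΩ', hΩ'L⟩ := exists_isOpen_tvOpen_lt_of_tv_lt hiL
  obtain ⟨h, gh, hh, hgh, hhu⟩ := exists_isUnitGradientPair_of_tvOpen_lt_of_cutoff
    (hc.mono (min_le_left _ _)) hG hW hUW inter_subset_left (hv.mono_set inter_subset_right)
    ((lintegral_mono_set inter_subset_right).trans_lt hgv).ne_top hΩ' hUΩ' hΩ'L hu (hu' i)
    (hu'mem i) hK hσ ((lintegral_mono_set (inter_subset_inter inter_subset_right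
      subset_union_right)).trans (hvu.le.trans (min_le_right _ _))) hiu.le
  refine ⟨h, gh, hh, hgh.trans ?_, hhu.trans (ENNReal.mul_le_of_le_div' hστ)⟩
  calc L + ∫⁻ x in (U ∪ G) ∩ Ω, ENNReal.ofReal (û x) * gv x ∂μ + (ε + 2 * σ)
      ≤ L + ε + (ε + 2 * ε) := by
        gcongr
        exact (lintegral_mono_set inter_subset_right).trans hcutoff
    _ = L + 4 * ε := by ring

theorem perim_lsc_in_quasiopen_general {u' : ℕ → X → ℝ} (hU : QuasiOpen μ U)
    (hu : AEMeasurable u μ) (humem : ∀ x, u x ∈ Icc (0 : ℝ) 1) (htv : tv μ U u < ∞)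
    (hu' : ∀ i, AEMeasurable (u' i) μ) (hu'mem : ∀ i x, u' i x ∈ Icc (0 : ℝ) 1)
    (hconv : L1LocConv μ U u' u) : tv μ U u ≤ liminf (fun i => tv μ U (u' i)) atTop := by
  refine ENNReal.le_of_forall_pos_le_add fun ε hε hfin => ?_
  set l := liminf (fun i => tv μ U (u' i)) atTop
  have hε5 : (0 : ℝ≥0∞) < ε / 5 := by simp [hε.ne']
  have hlt : ∃ᶠ i in atTop, tv μ U (u' i) < l + ε / 5 :=
    frequently_lt_of_liminf_lt (by isBoundedDefault) (ENNReal.lt_add_right hfin.ne hε5.ne')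
  calc tv μ U u ≤ l + ε / 5 + 4 * (ε / 5) :=
        tv_le_add_of_frequently_tv_lt hU hu humem htv hu' hu'mem hconv (by finiteness) hlt hε5
          (by finiteness)
    _ = l + 5 * (ε / 5) := by ring
    _ ≤ l + ε := by
        gcongr
        exact ENNReal.mul_div_le

theorem indicator_one_mem_Icc {Y : Type*} (E : Set Y) (x : Y) :
    E.indicator (fun _ => (1 : ℝ)) x ∈ Icc (0 : ℝ) 1 :=
  ⟨indicator_nonneg (fun _ _ => zero_le_one) x, indicator_le_self' (fun _ _ => zero_le_one) x⟩

end LowerSemicontinuity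

/-- Lower semicontinuity of the perimeter in `1`-quasiopen sets:
if `U` is `1`-quasiopen, `E, E_i` are `μ`-measurable with `P(E,U) < ∞`, `P(E_i,U) < ∞`,
and `χ_{E_i} → χ_E` in `L¹_loc(U)`, then `P(E,U) ≤ liminf_i P(E_i,U)`. -/
theorem perim_lsc_in_quasiopen
    (μ : Measure X) (hcomp : CompleteSpace X)
    (hdoub : ∃ Cd : ℝ, Doubling μ Cd) (hpoin : ∃ CP lam : ℝ, Poincare μ CP lam)
    (U : Set X) (hU : QuasiOpen μ U) (E : Set X) (Ei : ℕ → Set X)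
    (hE : NullMeasurableSet E μ) (hEi : ∀ i, NullMeasurableSet (Ei i) μ)
    (hfin : perim μ E U < ∞) (hfini : ∀ i, perim μ (Ei i) U < ∞)
    (hconv : L1LocConv μ U (fun i => Set.indicator (Ei i) (fun _ => (1 : ℝ)))
      (Set.indicator E (fun _ => (1 : ℝ)))) :
    perim μ E U ≤ Filter.liminf (fun i => perim μ (Ei i) U) Filter.atTop := by
  obtain ⟨Cd, hdoubling⟩ := hdoub
  have := hdoubling.properSpace
  have := hdoubling.isLocallyFiniteMeasure
  exact perim_lsc_in_quasiopen_general hU (aemeasurable_const.indicator₀ hE)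
    (indicator_one_mem_Icc E) hfin (fun i => aemeasurable_const.indicator₀ (hEi i))
    (fun i => indicator_one_mem_Icc (Ei i)) hconv

end PaperBV
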